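/- Let a ∈ (−1,1) and b > 1. Then: (i) there is a constant C > 0 such that for every g ∈ X_{a,b} one has A₀[g] ∈ X_{a,b}, ∫₀^∞ x A₀[g](x) dx = 0 and ‖A₀[g]‖_{X_{a,b}} ≤ C ‖g‖_{X_{a,b}}; (ii) L[A₀[g]] = g almost everywhere on (0,∞) for every g ∈ X_{a,b}; (iii) if g ∈ X_{a,b} satisfies ∫₀^∞ x g(x) dx = 0 and L[g] = 0 almost everywhere, then g = 0 almost everywhere. Consequently L restricted to X⁰_{a,b} is a bijection onto X_{a,b} with bounded inverse A₀. -/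

import Mathlib

open MeasureTheory Real Set Filter

noncomputable def weight (a b x : ℝ) : ℝ := if x ≤ 1 then x ^ a else x ^ b

noncomputable def Xnorm (a b : ℝ) (g : ℝ → ℝ) : ℝ :=
  ∫ x in Ioi (0:ℝ), |g x| * weight a b x

def MemX (a b : ℝ) (g : ℝ → ℝ) : Prop :=
  IntegrableOn (fun x => g x * weight a b x) (Ioi 0)

noncomputable def Kern (ε : ℝ) (W : ℝ → ℝ → ℝ) (x y : ℝ) : ℝ := 2 + ε * W x y

def GoodW (α : ℝ) (W : ℝ → ℝ → ℝ) : Prop :=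
  ContinuousOn (fun p : ℝ × ℝ => W p.1 p.2) (Ioi 0 ×ˢ Ioi 0) ∧
  (∀ x y : ℝ, 0 < x → 0 < y → W x y = W y x) ∧
  (∀ l x y : ℝ, 0 < l → 0 < x → 0 < y → W (l * x) (l * y) = W x y) ∧
  (∀ x y : ℝ, 0 < x → 0 < y → 0 ≤ W x y ∧ W x y ≤ (x / y) ^ α + (y / x) ^ α)

def IsProfile (K : ℝ → ℝ → ℝ) (φ : ℝ → ℝ) : Prop :=
  LocallyIntegrableOn φ (Ioi 0) ∧
  (∀ᵐ x ∂(volume.restrict (Ioi (0:ℝ))), 0 ≤ φ x) ∧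
  IntegrableOn (fun x => x * φ x) (Ioi 0) ∧
  (∀ᵐ x ∂(volume.restrict (Ioi (0:ℝ))),
    x ^ 2 * φ x = ∫ y in Ioo 0 x, ∫ z in Ioi (x - y), y * K y z * φ y * φ z)

def IsNormalised (φ : ℝ → ℝ) : Prop := ∫ x in Ioi (0:ℝ), x * φ x = 1

noncomputable def Lop (g : ℝ → ℝ) (x : ℝ) : ℝ :=
  g x - (2 / x ^ 2) *
    ∫ y in Ioo 0 x, ∫ z in Ioi (x - y), (y * exp (-y) * g z + y * g y * exp (-z))

noncomputable def m1 (x : ℝ) : ℝ := (1 - x) * exp (-x)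

noncomputable def m2 (x : ℝ) : ℝ := 1 + (1 - x) * exp (-x) * ∫ z in (1:ℝ)..x, exp z / z

noncomputable def Efun (y : ℝ) : ℝ := exp y / y - ∫ z in (1:ℝ)..y, exp z / z

noncomputable def Aop (g : ℝ → ℝ) (x : ℝ) : ℝ :=
  g x + 2 * m1 x * (∫ y in (1:ℝ)..x, Efun y * g y) - 2 * m2 x * ∫ y in Ioi x, g y

noncomputable def A0op (g : ℝ → ℝ) (x : ℝ) : ℝ :=
  Aop g x + (∫ y in Ioi (0:ℝ), y * Aop g y) * m1 x

/-!
With `H(x) = ∫ₓ^∞ h` and `U(x) = ∫₀ˣ e^y H(y) dy`, two integrations by parts turn the linearised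
operator into a derivative, `L[h] = -(H - (2/x) e^{-x} U)'`, and `H - (2/x) e^{-x} U` vanishes at
infinity. Hence `L[h] = g` means `H - (2/x) e^{-x} U = G` with `G(x) = ∫ₓ^∞ g`. As `U' = e^x H`,
this is the linear first-order equation `V' = e^x x⁻² G` for `V = x⁻² U`, and
`H = 2x e^{-x} V + G`. Since `E' = -e^x x⁻²`, integration by parts gives
`V(x) = c - G(x) E(x) - ∫₁ˣ E g`, and `h = -H'` is `A₀[g]` when `c = -(1/2) ∫ y A[g](y) dy`.
A solution of `L[h] = 0` is therefore a multiple of `m₁`, and since `∫ x m₁ = -1` it vanishes once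
its first moment does. Boundedness is Schur's test for the three kernels in `A`: the `X_{a,b}`-norm
of the column at `y` is at most a multiple of the weight at `y`.
-/

open scoped Topology NNReal ENNReal

/-! ### Locally absolutely continuous primitives -/

/-- `F` is a locally absolutely continuous primitive of `f` on `s`: the fundamental theorem of
calculus holds between any two points of `s`. It replaces differentiability, since the primitives
of the merely integrable functions below are differentiable only almost everywhere. -/
structure IsACPrimitiveOn (F f : ℝ → ℝ) (s : Set ℝ) : Prop where
  intervalIntegrable : ∀ ⦃x⦄, x ∈ s → ∀ ⦃y⦄, y ∈ s → IntervalIntegrable f volume x y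
  integral_eq_sub : ∀ ⦃x⦄, x ∈ s → ∀ ⦃y⦄, y ∈ s → ∫ t in x..y, f t = F y - F x

theorem integral_mul_add_mul_intervalIntegral {f k : ℝ → ℝ} {x y : ℝ}
    (hf : IntervalIntegrable f volume x y) (hk : IntervalIntegrable k volume x y) (A B : ℝ) :
    ∫ t in x..y, (f t * (B + ∫ r in x..t, k r) + (A + ∫ r in x..t, f r) * k t) =
      (A + ∫ r in x..y, f r) * (B + ∫ r in x..y, k r) - A * B := by
  have hconst (c : ℝ) : AbsolutelyContinuousOnInterval (fun _ => c) x y :=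
    contDiffOn_const.absolutelyContinuousOnInterval
  have hF := (hconst A).add
    (hf.absolutelyContinuousOnInterval_intervalIntegral (c := x) left_mem_uIcc)
  have hK := (hconst B).add
    (hk.absolutelyContinuousOnInterval_intervalIntegral (c := x) left_mem_uIcc)
  have hparts := hF.integral_deriv_mul_eq_sub hK
  simp only [Pi.add_apply, intervalIntegral.integral_same, add_zero] at hparts
  rw [← hparts]
  refine intervalIntegral.integral_congr_ae ?_
  filter_upwards [hf.ae_hasDerivAt_integral, hk.ae_hasDerivAt_integral] with t hft hkt ht
  have ht' := uIoc_subset_uIcc ht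
  have hFt := ((hft ht' x left_mem_uIcc).const_add A).deriv
  have hKt := ((hkt ht' x left_mem_uIcc).const_add B).deriv
  simp only [Pi.add_def]
  rw [hFt, hKt]

theorem tendsto_intervalIntegral_nhdsGT {f : ℝ → ℝ} {x y : ℝ} (hxy : x < y)
    (hf : IntervalIntegrable f volume x y) :
    Tendsto (fun t => ∫ r in x..t, f r) (𝓝[>] x) (𝓝 0) := by
  have hcont := (hf.absolutelyContinuousOnInterval_intervalIntegral
    (c := x) left_mem_uIcc).continuousOn x left_mem_uIcc
  rw [ContinuousWithinAt, intervalIntegral.integral_same, uIcc_of_le hxy.le,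
    nhdsWithin_Icc_eq_nhdsGE hxy] at hcont
  exact hcont.mono_left (nhdsWithin_mono _ Ioi_subset_Ici_self)

namespace IsACPrimitiveOn

variable {F K f k : ℝ → ℝ} {s : Set ℝ}

theorem congr [s.OrdConnected] (h : IsACPrimitiveOn F f s) (hF : EqOn F K s) (hf : EqOn f k s) :
    IsACPrimitiveOn K k s where
  intervalIntegrable x hx y hy :=
    (h.intervalIntegrable hx hy).congr
      (hf.mono (uIoc_subset_uIcc.trans (OrdConnected.uIcc_subset ‹_› hx hy)))
  integral_eq_sub x hx y hy := by
    rw [← hF hx, ← hF hy, ← h.integral_eq_sub hx hy]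
    exact intervalIntegral.integral_congr (hf.symm.mono (OrdConnected.uIcc_subset ‹_› hx hy))

theorem congr_ae [s.OrdConnected] (h : IsACPrimitiveOn F f s)
    (hf : f =ᵐ[volume.restrict s] k) : IsACPrimitiveOn F k s := by
  have hfk {x y : ℝ} (hx : x ∈ s) (hy : y ∈ s) : f =ᵐ[volume.restrict (uIoc x y)] k :=
    ae_restrict_of_ae_restrict_of_subset
      (uIoc_subset_uIcc.trans (OrdConnected.uIcc_subset ‹_› hx hy)) hf
  exact ⟨fun x hx y hy => (h.intervalIntegrable hx hy).congr_ae (hfk hx hy), fun x hx y hy =>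
    (intervalIntegral.integral_congr_ae_restrict (hfk hx hy).symm).trans
      (h.integral_eq_sub hx hy)⟩

theorem add (h : IsACPrimitiveOn F f s) (h' : IsACPrimitiveOn K k s) :
    IsACPrimitiveOn (fun x => F x + K x) (fun x => f x + k x) s where
  intervalIntegrable _ hx _ hy := (h.intervalIntegrable hx hy).add (h'.intervalIntegrable hx hy)
  integral_eq_sub x hx y hy := by
    rw [intervalIntegral.integral_add (h.intervalIntegrable hx hy) (h'.intervalIntegrable hx hy),
      h.integral_eq_sub hx hy, h'.integral_eq_sub hx hy]
    ring

theorem const_mul (h : IsACPrimitiveOn F f s) (c : ℝ) :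
    IsACPrimitiveOn (fun x => c * F x) (fun x => c * f x) s where
  intervalIntegrable _ hx _ hy := (h.intervalIntegrable hx hy).const_mul c
  integral_eq_sub x hx y hy := by
    rw [intervalIntegral.integral_const_mul, h.integral_eq_sub hx hy, mul_sub]

theorem sub [s.OrdConnected] (h : IsACPrimitiveOn F f s) (h' : IsACPrimitiveOn K k s) :
    IsACPrimitiveOn (fun x => F x - K x) (fun x => f x - k x) s :=
  (h.add (h'.const_mul (-1))).congr (fun x _ => by ring) (fun x _ => by ring)

theorem const (c : ℝ) (s : Set ℝ) : IsACPrimitiveOn (fun _ => c) (fun _ => 0) s :=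
  ⟨fun _ _ _ _ => intervalIntegrable_const, fun _ _ _ _ => by simp⟩

theorem of_hasDerivAt [s.OrdConnected] (h : ∀ x ∈ s, HasDerivAt F (f x) x)
    (hf : ContinuousOn f s) : IsACPrimitiveOn F f s := by
  have hint ⦃x : ℝ⦄ (hx : x ∈ s) ⦃y : ℝ⦄ (hy : y ∈ s) : IntervalIntegrable f volume x y :=
    (hf.mono (OrdConnected.uIcc_subset ‹_› hx hy)).intervalIntegrable
  exact ⟨hint, fun x hx y hy => intervalIntegral.integral_eq_sub_of_hasDerivAt
    (fun t ht => h t (OrdConnected.uIcc_subset ‹_› hx hy ht)) (hint hx hy)⟩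

theorem of_intervalIntegrable {c : ℝ} (hf : ∀ x ∈ s, IntervalIntegrable f volume c x) :
    IsACPrimitiveOn (fun x => ∫ t in c..x, f t) f s :=
  ⟨fun x hx y hy => (hf x hx).symm.trans (hf y hy), fun x hx y hy =>
    (intervalIntegral.integral_interval_sub_left (hf y hy) (hf x hx)).symm⟩

theorem eq_add_integral (h : IsACPrimitiveOn F f s) {x y : ℝ} (hx : x ∈ s) (hy : y ∈ s) :
    F y = F x + ∫ t in x..y, f t := by
  rw [h.integral_eq_sub hx hy, add_sub_cancel]

theorem continuousOn_uIcc [s.OrdConnected] (h : IsACPrimitiveOn F f s) {x y : ℝ} (hx : x ∈ s)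
    (hy : y ∈ s) : ContinuousOn F (uIcc x y) := by
  have hcont := ((h.intervalIntegrable hx hy).absolutelyContinuousOnInterval_intervalIntegral
    (c := x) left_mem_uIcc).continuousOn
  exact (continuousOn_const.add hcont).congr
    fun t ht => h.eq_add_integral hx (OrdConnected.uIcc_subset ‹_› hx hy ht)

theorem continuousOn [s.OrdConnected] (hs : IsOpen s) (h : IsACPrimitiveOn F f s) :
    ContinuousOn F s := by
  intro x hx
  obtain ⟨u, v, huxv, hnhds, hsub⟩ := exists_Icc_mem_subset_of_mem_nhds (hs.mem_nhds hx)
  have huv : u ≤ v := huxv.1.trans huxv.2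
  have hcont := h.continuousOn_uIcc (hsub (left_mem_Icc.2 huv)) (hsub (right_mem_Icc.2 huv))
  rw [uIcc_of_le huv] at hcont
  exact (hcont.continuousAt hnhds).continuousWithinAt

theorem mul [s.OrdConnected] (h : IsACPrimitiveOn F f s) (h' : IsACPrimitiveOn K k s) :
    IsACPrimitiveOn (fun x => F x * K x) (fun x => f x * K x + F x * k x) s where
  intervalIntegrable x hx y hy :=
    ((h.intervalIntegrable hx hy).mul_continuousOn (h'.continuousOn_uIcc hx hy)).add
      ((h'.intervalIntegrable hx hy).continuousOn_mul (h.continuousOn_uIcc hx hy))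
  integral_eq_sub x hx y hy := by
    rw [h.eq_add_integral hx hy, h'.eq_add_integral hx hy,
      ← integral_mul_add_mul_intervalIntegral (h.intervalIntegrable hx hy)
        (h'.intervalIntegrable hx hy)]
    refine intervalIntegral.integral_congr fun t ht => ?_
    have hts := OrdConnected.uIcc_subset ‹_› hx hy ht
    simp only [← h.eq_add_integral hx hts, ← h'.eq_add_integral hx hts]

theorem ae_hasDerivAt [s.OrdConnected] (hs : IsOpen s) (h : IsACPrimitiveOn F f s) :
    ∀ᵐ x ∂volume.restrict s, HasDerivAt F (f x) x := by
  refine ae_restrict_of_ae_restrict_inter_Ioo fun u v hu hv _ => ?_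
  rw [ae_restrict_iff' (hs.measurableSet.inter measurableSet_Ioo)]
  filter_upwards [(h.intervalIntegrable hu hv).ae_hasDerivAt_integral] with x hx hxs
  have hxuv : x ∈ uIcc u v := Icc_subset_uIcc (Ioo_subset_Icc_self hxs.2)
  refine ((hx hxuv u left_mem_uIcc).const_add (F u)).congr_of_eventuallyEq ?_
  filter_upwards [hs.mem_nhds hxs.1] with t ht using h.eq_add_integral hu ht

theorem ae_eq [s.OrdConnected] (hs : IsOpen s) (h : IsACPrimitiveOn F f s)
    (h' : IsACPrimitiveOn F k s) : f =ᵐ[volume.restrict s] k := by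
  filter_upwards [h.ae_hasDerivAt hs, h'.ae_hasDerivAt hs] with x hx hx' using hx.unique hx'

theorem eqOn_of_tendsto {l : Filter ℝ} [l.NeBot] (h : IsACPrimitiveOn F f s)
    (h' : IsACPrimitiveOn K f s) (hl : ∀ᶠ x in l, x ∈ s) {A : ℝ} (hF : Tendsto F l (𝓝 A))
    (hK : Tendsto K l (𝓝 A)) : EqOn F K s := by
  intro x hx
  have hconst : ∀ᶠ y in l, F y - K y = F x - K x := by
    filter_upwards [hl] with y hy
    linarith [h.integral_eq_sub hx hy, h'.integral_eq_sub hx hy]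
  have hlim := tendsto_nhds_unique_of_eventuallyEq (hF.sub hK) tendsto_const_nhds hconst
  linarith

theorem sub_le_sub (h : IsACPrimitiveOn F f s) (h' : IsACPrimitiveOn K k s) {x y : ℝ}
    (hx : x ∈ s) (hy : y ∈ s) (hxy : x ≤ y) (hfk : ∀ t ∈ Icc x y, f t ≤ k t) :
    F y - F x ≤ K y - K x := by
  rw [← h.integral_eq_sub hx hy, ← h'.integral_eq_sub hx hy]
  exact intervalIntegral.integral_mono_on hxy (h.intervalIntegrable hx hy)
    (h'.intervalIntegrable hx hy) hfk

end IsACPrimitiveOn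

/-! ### Tail integrals -/

theorem lintegral_mul_setLIntegral_comm {α β : Type*} [MeasurableSpace α] [MeasurableSpace β]
    {μ : Measure α} {ν : Measure β} [SFinite μ] [SFinite ν] {s : Set (α × β)}
    (hs : MeasurableSet s) {u : α → ℝ≥0∞} {v : β → ℝ≥0∞} (hu : AEMeasurable u μ)
    (hv : AEMeasurable v ν) :
    ∫⁻ x, u x * ∫⁻ y in Prod.mk x ⁻¹' s, v y ∂ν ∂μ =
      ∫⁻ y, v y * ∫⁻ x in (fun x => (x, y)) ⁻¹' s, u x ∂μ ∂ν := by
  let w : α → β → ℝ≥0∞ := fun x y => s.indicator (fun p => u p.1 * v p.2) (x, y)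
  have hslice (x : α) : MeasurableSet (Prod.mk x ⁻¹' s) := measurable_prodMk_left hs
  have hslice' (y : β) : MeasurableSet ((fun x => (x, y)) ⁻¹' s) := measurable_prodMk_right hs
  have hleft (x : α) : u x * ∫⁻ y in Prod.mk x ⁻¹' s, v y ∂ν = ∫⁻ y, w x y ∂ν := by
    rw [← lintegral_indicator (hslice x),
      ← lintegral_const_mul'' _ (hv.indicator (hslice x))]
    refine lintegral_congr fun y => ?_
    by_cases hxy : (x, y) ∈ s <;> simp [w, hxy]
  have hright (y : β) : v y * ∫⁻ x in (fun x => (x, y)) ⁻¹' s, u x ∂μ = ∫⁻ x, w x y ∂μ := by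
    rw [← lintegral_indicator (hslice' y),
      ← lintegral_const_mul'' _ (hu.indicator (hslice' y))]
    refine lintegral_congr fun x => ?_
    by_cases hxy : (x, y) ∈ s <;> simp [w, hxy, mul_comm]
  simp only [hleft, hright]
  refine lintegral_lintegral_swap ?_
  exact ((hu.comp_quasiMeasurePreserving Measure.quasiMeasurePreserving_fst).mul
    (hv.comp_quasiMeasurePreserving Measure.quasiMeasurePreserving_snd)).indicator hs

/-- `h` has a finite absolute first moment on `(0,∞)`. In the coagulation model this is finite
mass, the only integrability that the factorisation of `Lop` needs. -/
def HasFirstMoment (h : ℝ → ℝ) : Prop := IntegrableOn (fun y => y * h y) (Ioi 0)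

/-- The tail integral `∫ₓ^∞ h`, the primitive of `-h` vanishing at infinity, in terms of which
`Lop` becomes a first-order differential operator. -/
noncomputable def tail (h : ℝ → ℝ) (x : ℝ) : ℝ := ∫ y in Ioi x, h y

namespace HasFirstMoment

variable {h : ℝ → ℝ}

theorem aestronglyMeasurable (hh : HasFirstMoment h) :
    AEStronglyMeasurable h (volume.restrict (Ioi 0)) := by
  refine (measurable_inv.aestronglyMeasurable.mul (Integrable.aestronglyMeasurable hh)).congr ?_
  filter_upwards [ae_restrict_mem measurableSet_Ioi] with x hx
  exact inv_mul_cancel_left₀ (ne_of_gt hx) (h x)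

theorem abs (hh : HasFirstMoment h) : HasFirstMoment fun y => |h y| :=
  (Integrable.abs hh).congr <| by
    filter_upwards [ae_restrict_mem measurableSet_Ioi] with y hy
    rw [abs_mul, abs_of_pos hy]

theorem integrableOn_Ioi (hh : HasFirstMoment h) {x : ℝ} (hx : 0 < x) :
    IntegrableOn h (Ioi x) := by
  have hsub : Ioi x ⊆ Ioi 0 := Ioi_subset_Ioi hx.le
  refine Integrable.mono' ((hh.abs.mono_set hsub).const_mul x⁻¹)
    (hh.aestronglyMeasurable.mono_measure (Measure.restrict_mono hsub le_rfl)) ?_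
  filter_upwards [ae_restrict_mem measurableSet_Ioi] with y hy
  rw [norm_eq_abs, ← mul_assoc]
  exact le_mul_of_one_le_left (abs_nonneg _) ((one_le_inv_mul₀ hx).2 (le_of_lt hy))

theorem isACPrimitiveOn_tail (hh : HasFirstMoment h) :
    IsACPrimitiveOn (tail h) (fun x => -h x) (Ioi 0) where
  intervalIntegrable x hx y hy :=
    (intervalIntegrable_iff.2 <|
      (hh.integrableOn_Ioi (lt_min hx hy)).mono_set Ioc_subset_Ioi_self).neg
  integral_eq_sub x hx y hy := by
    rw [intervalIntegral.integral_neg, neg_eq_iff_eq_neg, neg_sub]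
    exact (intervalIntegral.integral_Ioi_sub_Ioi' (hh.integrableOn_Ioi hx)
      (hh.integrableOn_Ioi hy)).symm

theorem continuousOn_tail (hh : HasFirstMoment h) : ContinuousOn (tail h) (Ioi 0) :=
  hh.isACPrimitiveOn_tail.continuousOn isOpen_Ioi

theorem tendsto_tail_atTop (hh : HasFirstMoment h) : Tendsto (tail h) atTop (𝓝 0) := by
  have hlim := (intervalIntegral_tendsto_integral_Ioi 1
    (hh.integrableOn_Ioi one_pos) tendsto_id).const_sub (tail h 1)
  rw [← tail, sub_self] at hlim
  refine hlim.congr' ?_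
  filter_upwards [eventually_gt_atTop 0] with x hx
  rw [hh.isACPrimitiveOn_tail.eq_add_integral (mem_Ioi.2 one_pos) hx,
    intervalIntegral.integral_neg, id, sub_eq_add_neg]

theorem tendsto_mul_tail_nhdsGT_zero (hh : HasFirstMoment h) :
    Tendsto (fun x => x * tail h x) (𝓝[>] 0) (𝓝 0) := by
  have hdom : Tendsto (fun x => ∫ y in Ioi 0, (Ioi x).indicator (fun y => x * h y) y) (𝓝[>] 0)
      (𝓝 (∫ _ in Ioi (0 : ℝ), (0 : ℝ))) := by
    refine tendsto_integral_filter_of_dominated_convergence (fun y => y * |h y|)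
      (.of_forall fun x => (hh.aestronglyMeasurable.const_mul x).indicator measurableSet_Ioi)
      ?_ hh.abs ?_
    · filter_upwards [self_mem_nhdsWithin] with x (hx : 0 < x)
      filter_upwards [ae_restrict_mem measurableSet_Ioi] with y (hy : 0 < y)
      by_cases hxy : x < y
      · rw [indicator_of_mem (mem_Ioi.2 hxy), norm_mul, norm_of_nonneg hx.le, norm_eq_abs]
        gcongr
      · rw [indicator_of_notMem (notMem_Ioi.2 (not_lt.1 hxy)), norm_zero]
        positivity
    · filter_upwards [ae_restrict_mem measurableSet_Ioi] with y (hy : 0 < y)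
      have hlim : Tendsto (fun x => x * h y) (𝓝[>] 0) (𝓝 0) :=
        ((continuous_mul_const (h y)).tendsto' 0 0 (zero_mul _)).mono_left nhdsWithin_le_nhds
      refine hlim.congr' ?_
      filter_upwards [Ioo_mem_nhdsGT hy] with x hx
      rw [indicator_of_mem (mem_Ioi.2 hx.2)]
  rw [integral_zero] at hdom
  refine hdom.congr' ?_
  filter_upwards [self_mem_nhdsWithin] with x (hx : 0 < x)
  rw [integral_indicator measurableSet_Ioi, Measure.restrict_restrict measurableSet_Ioi,
    inter_eq_left.2 (Ioi_subset_Ioi hx.le), integral_const_mul, tail]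

theorem integrableOn_tail (hh : HasFirstMoment h) : IntegrableOn (tail h) (Ioi 0) := by
  refine ⟨hh.continuousOn_tail.aestronglyMeasurable measurableSet_Ioi, ?_⟩
  calc ∫⁻ x in Ioi 0, ‖tail h x‖ₑ
      ≤ ∫⁻ x in Ioi 0, 1 * ∫⁻ y in Ioi x, ‖h y‖ₑ ∂volume.restrict (Ioi 0) := by
        refine setLIntegral_mono' measurableSet_Ioi fun x hx => ?_
        rw [one_mul, Measure.restrict_restrict measurableSet_Ioi,
          inter_eq_left.2 (Ioi_subset_Ioi (le_of_lt hx))]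
        exact enorm_integral_le_lintegral_enorm _
    _ = ∫⁻ y in Ioi 0, ‖h y‖ₑ * ∫⁻ _ in Iio y, 1 ∂volume.restrict (Ioi 0) :=
        lintegral_mul_setLIntegral_comm (measurableSet_lt measurable_fst measurable_snd)
          aemeasurable_const hh.aestronglyMeasurable.enorm
    _ = ∫⁻ y in Ioi 0, ‖y * h y‖ₑ := by
        refine setLIntegral_congr_fun measurableSet_Ioi fun y hy => ?_
        simp [enorm_mul, mul_comm, enorm_of_nonneg (le_of_lt hy),
          Measure.restrict_apply, Iio_inter_Ioi]
    _ < ∞ := hh.hasFiniteIntegral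

theorem intervalIntegrable_mul_tail (hh : HasFirstMoment h) {c : ℝ → ℝ} (hc : Continuous c)
    {x : ℝ} (hx : 0 < x) : IntervalIntegrable (fun y => c y * tail h y) volume 0 x :=
  ((intervalIntegrable_iff_integrableOn_Ioc_of_le hx.le).2
    (hh.integrableOn_tail.mono_set Ioc_subset_Ioi_self)).continuousOn_mul hc.continuousOn

theorem intervalIntegrable_mul_firstMoment (hh : HasFirstMoment h) {c : ℝ → ℝ}
    (hc : Continuous c) {x : ℝ} (hx : 0 < x) :
    IntervalIntegrable (fun y => c y * (y * h y)) volume 0 x :=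
  ((intervalIntegrable_iff_integrableOn_Ioc_of_le hx.le).2
    (hh.mono_set Ioc_subset_Ioi_self)).continuousOn_mul hc.continuousOn

end HasFirstMoment

/-! ### The linearised operator as a derivative -/

/-- The weighted integral `∫₀ˣ e^y H(y) dy` of the tail `H` of `h`: the unknown of the linear
first-order equation to which `L[h] = g` reduces. -/
noncomputable def expTail (h : ℝ → ℝ) (x : ℝ) : ℝ := ∫ y in (0 : ℝ)..x, exp y * tail h y

/-- The combination of the tail of `h` and `expTail h` whose derivative is `-L[h]`. -/
noncomputable def flux (h : ℝ → ℝ) (x : ℝ) : ℝ :=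
  tail h x - 2 / x * exp (-x) * expTail h x

theorem exp_neg_mul_exp (x : ℝ) : exp (-x) * exp x = 1 := by
  rw [← exp_add, neg_add_cancel, exp_zero]

theorem hasDerivAt_exp_neg (x : ℝ) : HasDerivAt (fun y => exp (-y)) (-exp (-x)) x := by
  simpa only [mul_neg_one] using (hasDerivAt_neg x).exp

theorem isACPrimitiveOn_two_div_mul_exp_neg :
    IsACPrimitiveOn (fun x => 2 / x * exp (-x)) (fun x => -(2 * (1 + x) / x ^ 2 * exp (-x)))
      (Ioi 0) := by
  refine .of_hasDerivAt (fun x (hx : 0 < x) => ?_) ?_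
  · refine (((hasDerivAt_inv hx.ne').const_mul 2).mul (hasDerivAt_exp_neg x)).congr_deriv ?_
    field_simp
    ring
  · have hne : ∀ x ∈ Ioi (0 : ℝ), x ^ 2 ≠ 0 := fun x hx => pow_ne_zero 2 (ne_of_gt hx)
    fun_prop (disch := assumption)

namespace HasFirstMoment

variable {g h : ℝ → ℝ}

theorem isACPrimitiveOn_expTail (hh : HasFirstMoment h) :
    IsACPrimitiveOn (expTail h) (fun y => exp y * tail h y) (Ioi 0) :=
  .of_intervalIntegrable fun _ hx => hh.intervalIntegrable_mul_tail continuous_exp hx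

theorem tendsto_expTail_nhdsGT_zero (hh : HasFirstMoment h) :
    Tendsto (expTail h) (𝓝[>] 0) (𝓝 0) :=
  tendsto_intervalIntegral_nhdsGT one_pos (hh.intervalIntegrable_mul_tail continuous_exp one_pos)

theorem abs_exp_neg_mul_expTail_le (hh : HasFirstMoment h) {x : ℝ} (hx : 0 < x) :
    |exp (-x) * expTail h x| ≤ ∫ y in Ioi (0 : ℝ), |tail h y| := by
  have hint : IntegrableOn (fun y => |tail h y|) (Ioi 0) := hh.integrableOn_tail.abs
  rw [expTail, ← intervalIntegral.integral_const_mul, intervalIntegral.integral_of_le hx.le]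
  calc |∫ y in Ioc 0 x, exp (-x) * (exp y * tail h y)|
      ≤ ∫ y in Ioc 0 x, |tail h y| := by
        refine (norm_eq_abs _).symm.trans_le
          (norm_integral_le_of_norm_le (hint.mono_set Ioc_subset_Ioi_self) ?_)
        filter_upwards [ae_restrict_mem measurableSet_Ioc] with y hy
        rw [← mul_assoc, ← exp_add, norm_mul, norm_of_nonneg (exp_pos _).le, norm_eq_abs]
        exact mul_le_of_le_one_left (abs_nonneg _) (exp_le_one_iff.2 (by linarith [hy.2]))
    _ ≤ ∫ y in Ioi (0 : ℝ), |tail h y| :=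
        setIntegral_mono_set hint (.of_forall fun y => abs_nonneg _)
          Ioc_subset_Ioi_self.eventuallyLE

theorem integral_exp_mul_firstMoment (hh : HasFirstMoment h) {x : ℝ} (hx : 0 < x) :
    ∫ y in (0 : ℝ)..x, exp y * (y * h y) =
      (∫ y in (0 : ℝ)..x, (1 + y) * exp y * tail h y) - exp x * (x * tail h x) := by
  have hint₁ {x : ℝ} (hx : 0 < x) := hh.intervalIntegrable_mul_tail
    (c := fun y => (1 + y) * exp y) (by fun_prop) hx
  have hint₂ {x : ℝ} (hx : 0 < x) := hh.intervalIntegrable_mul_firstMoment continuous_exp hx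
  have hint {x : ℝ} (hx : 0 < x) := (hint₁ hx).sub (hint₂ hx)
  have hprod : IsACPrimitiveOn (fun y => exp y * (y * tail h y))
      (fun y => (1 + y) * exp y * tail h y - exp y * (y * h y)) (Ioi 0) := by
    have hexp : IsACPrimitiveOn (fun y => exp y * y) (fun y => (1 + y) * exp y) (Ioi 0) :=
      .of_hasDerivAt (fun y _ => ((Real.hasDerivAt_exp y).mul (hasDerivAt_id y)).congr_deriv
        (by simp only [id]; ring)) (by fun_prop)
    exact (hexp.mul hh.isACPrimitiveOn_tail).congr (fun y _ => by ring) (fun y _ => by ring)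
  have hlim : Tendsto (fun y => exp y * (y * tail h y)) (𝓝[>] 0) (𝓝 0) := by
    simpa only [mul_zero] using ((continuous_exp.tendsto 0).mono_left nhdsWithin_le_nhds).mul
      hh.tendsto_mul_tail_nhdsGT_zero
  have heq := hprod.eqOn_of_tendsto (.of_intervalIntegrable fun x hx => hint hx)
    eventually_mem_nhdsWithin hlim (tendsto_intervalIntegral_nhdsGT one_pos (hint one_pos)) hx
  simp only [intervalIntegral.integral_sub (hint₁ hx) (hint₂ hx)] at heq
  linarith

theorem integral_Ioi_linearised_kernel (hh : HasFirstMoment h) {x y : ℝ} (hyx : y < x) :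
    ∫ z in Ioi (x - y), (y * exp (-y) * h z + y * h y * exp (-z)) =
      y * exp (-y) * tail h (x - y) + exp (-x) * (exp y * (y * h y)) := by
  rw [integral_add ((hh.integrableOn_Ioi (sub_pos.2 hyx)).const_mul _)
      ((integrableOn_exp_neg_Ioi _).const_mul _), integral_const_mul, integral_const_mul,
    integral_exp_neg_Ioi, neg_sub, sub_eq_neg_add y x, exp_add, tail]
  ring

theorem integral_linearised_kernel (hh : HasFirstMoment h) {x : ℝ} (hx : 0 < x) :
    ∫ y in Ioo 0 x, ∫ z in Ioi (x - y), (y * exp (-y) * h z + y * h y * exp (-z)) =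
      (1 + x) * exp (-x) * expTail h x - x * tail h x := by
  have hrefl := intervalIntegral.integral_comp_sub_left (a := 0) (b := x)
    (fun t => (x - t) * exp (-(x - t)) * tail h t) x
  have hint := hh.intervalIntegrable_mul_tail (c := fun t => (x - t) * exp (-(x - t)))
    (by fun_prop) hx
  have hint' := (hint.comp_sub_left x).symm
  simp only [sub_sub_cancel, sub_self, sub_zero] at hrefl hint'
  have hint₁ := hh.intervalIntegrable_mul_tail (c := fun t => (1 + t) * exp t) (by fun_prop) hx
  calc ∫ y in Ioo 0 x, ∫ z in Ioi (x - y), (y * exp (-y) * h z + y * h y * exp (-z))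
      = ∫ y in (0 : ℝ)..x, (y * exp (-y) * tail h (x - y) + exp (-x) * (exp y * (y * h y))) := by
        rw [intervalIntegral.integral_of_le hx.le, integral_Ioc_eq_integral_Ioo]
        exact setIntegral_congr_fun measurableSet_Ioo
          fun y hy => hh.integral_Ioi_linearised_kernel hy.2
    _ = (∫ t in (0 : ℝ)..x, (x - t) * exp (-(x - t)) * tail h t) +
          exp (-x) * ∫ y in (0 : ℝ)..x, exp y * (y * h y) := by
        rw [intervalIntegral.integral_add hint'
          ((hh.intervalIntegrable_mul_firstMoment continuous_exp hx).const_mul _), hrefl,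
          intervalIntegral.integral_const_mul]
    _ = ((∫ t in (0 : ℝ)..x, (x - t) * exp (-(x - t)) * tail h t) +
          exp (-x) * ∫ t in (0 : ℝ)..x, (1 + t) * exp t * tail h t) - x * tail h x := by
        rw [hh.integral_exp_mul_firstMoment hx]
        linear_combination (-(x * tail h x)) * exp_neg_mul_exp x
    _ = (1 + x) * exp (-x) * expTail h x - x * tail h x := by
        rw [expTail, ← intervalIntegral.integral_const_mul, ← intervalIntegral.integral_const_mul,
          ← intervalIntegral.integral_add hint (hint₁.const_mul _)]
        congr 1
        refine intervalIntegral.integral_congr fun t _ => ?_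
        rw [neg_sub, sub_eq_neg_add t x, exp_add]
        ring

theorem Lop_eq (hh : HasFirstMoment h) {x : ℝ} (hx : 0 < x) :
    Lop h x = h x + 2 / x * tail h x - 2 * (1 + x) / x ^ 2 * exp (-x) * expTail h x := by
  rw [Lop, hh.integral_linearised_kernel hx]
  field_simp
  ring

theorem isACPrimitiveOn_flux (hh : HasFirstMoment h) :
    IsACPrimitiveOn (flux h) (fun x => -Lop h x) (Ioi 0) := by
  refine (hh.isACPrimitiveOn_tail.sub
    (isACPrimitiveOn_two_div_mul_exp_neg.mul hh.isACPrimitiveOn_expTail)).congr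
    (fun x _ => rfl) (fun x hx => ?_)
  rw [hh.Lop_eq hx]
  linear_combination (-(2 / x * tail h x)) * exp_neg_mul_exp x

theorem tendsto_flux_atTop (hh : HasFirstMoment h) : Tendsto (flux h) atTop (𝓝 0) := by
  have hbound : Tendsto (fun x => 2 / x * ∫ y in Ioi (0 : ℝ), |tail h y|) atTop (𝓝 0) := by
    simpa only [zero_mul, id] using
      (tendsto_const_nhds.div_atTop tendsto_id).mul_const (∫ y in Ioi (0 : ℝ), |tail h y|)
  have hexpTail : Tendsto (fun x => 2 / x * exp (-x) * expTail h x) atTop (𝓝 0) := by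
    refine squeeze_zero_norm' ?_ hbound
    filter_upwards [eventually_gt_atTop 0] with x hx
    rw [mul_assoc, norm_mul, norm_of_nonneg (by positivity)]
    gcongr
    exact hh.abs_exp_neg_mul_expTail_le hx
  simpa only [sub_zero] using! hh.tendsto_tail_atTop.sub hexpTail

theorem Lop_ae_eq_iff (hh : HasFirstMoment h) (hg : HasFirstMoment g) :
    Lop h =ᵐ[volume.restrict (Ioi 0)] g ↔ EqOn (flux h) (tail g) (Ioi 0) := by
  constructor
  · intro hL
    exact (hh.isACPrimitiveOn_flux.congr_ae hL.neg).eqOn_of_tendsto hg.isACPrimitiveOn_tail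
      (eventually_gt_atTop 0) hh.tendsto_flux_atTop hg.tendsto_tail_atTop
  · intro hflux
    have hae := (hh.isACPrimitiveOn_flux.congr hflux fun _ _ => rfl).ae_eq isOpen_Ioi
      hg.isACPrimitiveOn_tail
    filter_upwards [hae] with x hx using neg_injective hx

end HasFirstMoment

/-! ### The kernel of the linearised operator -/

theorem m1_mul_rpow_eqOn (p : ℝ) :
    EqOn (fun x => m1 x * x ^ p)
      (fun x => exp (-x) * x ^ (p + 1 - 1) - exp (-x) * x ^ (p + 2 - 1)) (Ioi 0) := by
  intro x hx
  have hpow : x ^ (p + 2 - 1) = x ^ p * x := by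
    rw [← rpow_add_one (ne_of_gt hx)]
    ring_nf
  simp only [m1, hpow, add_sub_cancel_right]
  ring

theorem integrableOn_m1_mul_rpow {p : ℝ} (hp : -1 < p) :
    IntegrableOn (fun x => m1 x * x ^ p) (Ioi 0) :=
  ((GammaIntegral_convergent (s := p + 1) (by linarith)).sub
    (GammaIntegral_convergent (s := p + 2) (by linarith))).congr_fun
      (m1_mul_rpow_eqOn p).symm measurableSet_Ioi

theorem integral_m1_mul_rpow {p : ℝ} (hp : -1 < p) :
    ∫ x in Ioi (0 : ℝ), m1 x * x ^ p = -p * Gamma (p + 1) := by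
  have hGamma : Gamma (p + 2) = (p + 1) * Gamma (p + 1) := by
    rw [← Gamma_add_one (by linarith)]
    ring_nf
  rw [setIntegral_congr_fun measurableSet_Ioi (m1_mul_rpow_eqOn p),
    integral_sub (GammaIntegral_convergent (by linarith)) (GammaIntegral_convergent (by linarith)),
    ← Gamma_eq_integral (by linarith), ← Gamma_eq_integral (by linarith), hGamma]
  ring

theorem hasFirstMoment_m1 : HasFirstMoment m1 := by
  simpa only [HasFirstMoment, rpow_one, mul_comm] using
    integrableOn_m1_mul_rpow (p := 1) (by norm_num)

theorem integral_mul_m1 : ∫ x in Ioi (0 : ℝ), x * m1 x = -1 := by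
  simpa only [rpow_one, mul_comm, one_add_one_eq_two, Gamma_two, one_mul] using
    integral_m1_mul_rpow (p := 1) (by norm_num)

theorem hasDerivAt_mul_exp_neg (x : ℝ) : HasDerivAt (fun y => y * exp (-y)) (m1 x) x :=
  ((hasDerivAt_id x).mul (hasDerivAt_exp_neg x)).congr_deriv (by simp only [m1, id]; ring)

theorem continuous_m1 : Continuous m1 := by
  unfold m1
  fun_prop

theorem isACPrimitiveOn_mul_exp_neg :
    IsACPrimitiveOn (fun x => x * exp (-x)) m1 (Ioi 0) :=
  .of_hasDerivAt (fun x _ => hasDerivAt_mul_exp_neg x) continuous_m1.continuousOn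

theorem isACPrimitiveOn_inv_sq :
    IsACPrimitiveOn (fun x => (x ^ 2)⁻¹) (fun x => -(2 / x ^ 3)) (Ioi 0) := by
  refine .of_hasDerivAt (fun x (hx : 0 < x) => ?_) ?_
  · refine ((hasDerivAt_pow 2 x).inv (pow_ne_zero 2 hx.ne')).congr_deriv ?_
    norm_num
    field_simp
  · have hne : ∀ x ∈ Ioi (0 : ℝ), x ^ 3 ≠ 0 := fun x hx => pow_ne_zero 3 (ne_of_gt hx)
    fun_prop (disch := assumption)

namespace HasFirstMoment

variable {g h : ℝ → ℝ}

theorem isACPrimitiveOn_expTail_div_sq (hh : HasFirstMoment h)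
    (hflux : EqOn (flux h) (tail g) (Ioi 0)) :
    IsACPrimitiveOn (fun x => expTail h x / x ^ 2) (fun x => exp x / x ^ 2 * tail g x)
      (Ioi 0) := by
  refine (isACPrimitiveOn_inv_sq.mul hh.isACPrimitiveOn_expTail).congr
    (fun x _ => by ring) (fun x (hx : 0 < x) => ?_)
  have htail : tail h x = 2 / x * exp (-x) * expTail h x + tail g x := by
    rw [← hflux hx, flux]
    ring
  simp only [htail]
  linear_combination (2 / x ^ 3 * expTail h x) * exp_neg_mul_exp x

theorem exists_ae_eq_const_mul_m1 (hh : HasFirstMoment h)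
    (hL : Lop h =ᵐ[volume.restrict (Ioi 0)] 0) :
    ∃ c, h =ᵐ[volume.restrict (Ioi 0)] fun x => c * m1 x := by
  have hzero : HasFirstMoment 0 := by simp [HasFirstMoment]
  have hflux := (hh.Lop_ae_eq_iff hzero).1 hL
  have htail_zero (x : ℝ) : tail 0 x = 0 := by simp [tail]
  have hV := (hh.isACPrimitiveOn_expTail_div_sq hflux).congr_ae (k := fun _ => 0)
    (.of_forall fun x => by simp [htail_zero])
  have hconst : ∀ x ∈ Ioi (0 : ℝ), 2 * expTail h 1 * (x * exp (-x)) = tail h x := by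
    intro x (hx : 0 < x)
    have hVx := hV.integral_eq_sub (mem_Ioi.2 one_pos) hx
    have hfx := hflux hx
    rw [intervalIntegral.integral_zero, one_pow, div_one, eq_comm, sub_eq_zero] at hVx
    rw [flux, htail_zero, sub_eq_zero] at hfx
    rw [hfx, ← hVx]
    field_simp
  have hderiv := ((isACPrimitiveOn_mul_exp_neg.const_mul (2 * expTail h 1)).congr hconst
    fun _ _ => rfl).ae_eq isOpen_Ioi hh.isACPrimitiveOn_tail
  refine ⟨-(2 * expTail h 1), ?_⟩
  filter_upwards [hderiv] with x hx using by linarith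

theorem ae_eq_zero_of_Lop_ae_eq_zero (hh : HasFirstMoment h)
    (hmoment : ∫ x in Ioi (0 : ℝ), x * h x = 0) (hL : Lop h =ᵐ[volume.restrict (Ioi 0)] 0) :
    h =ᵐ[volume.restrict (Ioi 0)] 0 := by
  obtain ⟨c, hc⟩ := hh.exists_ae_eq_const_mul_m1 hL
  have hc_zero : c = 0 := by
    have hint : ∫ x in Ioi (0 : ℝ), x * h x = ∫ x in Ioi (0 : ℝ), c * (x * m1 x) :=
      integral_congr_ae (by filter_upwards [hc] with x hx using by rw [hx]; ring)
    rw [hmoment, integral_const_mul, integral_mul_m1] at hint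
    linarith
  filter_upwards [hc] with x hx
  rw [hx, hc_zero, zero_mul, Pi.zero_apply]

end HasFirstMoment

/-! ### Growth of the kernel functions -/

theorem rpow_le_rpow_mul_exp_half {p x y : ℝ} (hp : 0 ≤ p) (hy : 1 ≤ y) (hyx : y ≤ x) :
    x ^ p ≤ (2 * p + 1) ^ p * y ^ p * exp ((x - y) / 2) := by
  have hq : 0 < 2 * p + 1 := by linarith
  have : 0 ≤ x - y := sub_nonneg.2 hyx
  have hgrowth : x ≤ (2 * p + 1) * exp ((x - y) / (2 * p + 1)) * y := by
    have hexp : 1 + (x - y) ≤ (2 * p + 1) * exp ((x - y) / (2 * p + 1)) := by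
      calc 1 + (x - y) ≤ (2 * p + 1) * ((x - y) / (2 * p + 1) + 1) := by
            rw [mul_add, mul_div_cancel₀ _ hq.ne']
            linarith
        _ ≤ (2 * p + 1) * exp ((x - y) / (2 * p + 1)) := by
            gcongr
            exact add_one_le_exp _
    calc x ≤ (1 + (x - y)) * y := by nlinarith
      _ ≤ _ := by gcongr
  calc x ^ p ≤ ((2 * p + 1) * exp ((x - y) / (2 * p + 1)) * y) ^ p := by
        gcongr
        linarith
    _ = (2 * p + 1) ^ p * y ^ p * exp ((x - y) / (2 * p + 1) * p) := by
        rw [mul_rpow (by positivity) (by positivity), mul_rpow hq.le (exp_pos _).le, ← exp_mul]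
        ring
    _ ≤ (2 * p + 1) ^ p * y ^ p * exp ((x - y) / 2) := by
        gcongr
        rw [div_mul_eq_mul_div, div_le_div_iff₀ hq two_pos]
        nlinarith

theorem exp_div_sq_le {x y : ℝ} (hy : 1 ≤ y) (hyx : y ≤ x) :
    exp y / y ^ 2 ≤ 25 * (exp x / x ^ 2) * exp ((y - x) / 2) := by
  have : 0 < y := by linarith
  have hx_pos : 0 < x := by linarith
  have hsq : x ^ 2 ≤ 25 * y ^ 2 * exp ((x - y) / 2) := by
    have := rpow_le_rpow_mul_exp_half (p := 2) zero_le_two hy hyx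
    norm_num at this
    exact this
  have hexp : exp x * exp ((y - x) / 2) = exp y * exp ((x - y) / 2) := by
    rw [← exp_add, ← exp_add]
    ring_nf
  calc exp y / y ^ 2 = exp y * x ^ 2 / (x ^ 2 * y ^ 2) := by field_simp
    _ ≤ exp y * (25 * y ^ 2 * exp ((x - y) / 2)) / (x ^ 2 * y ^ 2) := by gcongr
    _ = 25 * (exp y * exp ((x - y) / 2)) / x ^ 2 := by field_simp
    _ = 25 * (exp x / x ^ 2) * exp ((y - x) / 2) := by
        rw [← hexp]
        ring

theorem exp_div_sq_le_exp_div_sq {x y : ℝ} (hy : 1 ≤ y) (hyx : y ≤ x) :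
    exp y / y ^ 2 ≤ 25 * (exp x / x ^ 2) :=
  (exp_div_sq_le hy hyx).trans <|
    mul_le_of_le_one_right (by positivity) (exp_le_one_iff.2 (by linarith))

theorem setLIntegral_Ioi_rpow_mul_exp_neg_le {p y : ℝ} (hp : 0 ≤ p) (hy : 1 ≤ y) :
    ∫⁻ x in Ioi y, ENNReal.ofReal (x ^ p * exp (-x)) ≤
      ENNReal.ofReal (2 * (2 * p + 1) ^ p * (y ^ p * exp (-y))) := by
  set K := (2 * p + 1) ^ p * y ^ p * exp (-(y / 2)) with hK
  have : 0 ≤ K := by positivity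
  calc ∫⁻ x in Ioi y, ENNReal.ofReal (x ^ p * exp (-x))
      ≤ ∫⁻ x in Ioi y, ENNReal.ofReal (K * exp (-(1 / 2) * x)) := by
        refine setLIntegral_mono' measurableSet_Ioi fun x (hx : y < x) => ?_
        refine ENNReal.ofReal_le_ofReal ?_
        calc x ^ p * exp (-x) ≤ (2 * p + 1) ^ p * y ^ p * exp ((x - y) / 2) * exp (-x) := by
              gcongr
              exact rpow_le_rpow_mul_exp_half hp hy hx.le
          _ = K * exp (-(1 / 2) * x) := by
              rw [hK, mul_assoc, mul_assoc _ (exp (-(y / 2))), ← exp_add, ← exp_add]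
              ring_nf
    _ = ENNReal.ofReal (K * ∫ x in Ioi y, exp (-(1 / 2) * x)) := by
        rw [← integral_const_mul, ofReal_integral_eq_lintegral_ofReal
          ((integrableOn_exp_mul_Ioi (by norm_num) y).const_mul K)
          (.of_forall fun x => by positivity)]
    _ = ENNReal.ofReal (2 * (2 * p + 1) ^ p * (y ^ p * exp (-y))) := by
        have hexp : exp (-y) = exp (-(y / 2)) * exp (-(1 / 2) * y) := by
          rw [← exp_add]
          ring_nf
        rw [integral_exp_mul_Ioi (by norm_num), hexp, hK]
        congr 1
        ring

theorem isACPrimitiveOn_integral_exp_div :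
    IsACPrimitiveOn (fun x => ∫ z in (1 : ℝ)..x, exp z / z) (fun z => exp z / z) (Ioi 0) := by
  refine .of_intervalIntegrable fun x hx => ContinuousOn.intervalIntegrable ?_
  have hne : ∀ z ∈ uIcc 1 x, z ≠ 0 := fun z hz =>
    (ordConnected_Ioi.uIcc_subset (mem_Ioi.2 one_pos) hx hz).ne'
  fun_prop (disch := assumption)

theorem isACPrimitiveOn_Efun :
    IsACPrimitiveOn Efun (fun y => -(exp y / y ^ 2)) (Ioi 0) := by
  have hquot : IsACPrimitiveOn (fun y => exp y / y) (fun y => exp y / y - exp y / y ^ 2)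
      (Ioi 0) := by
    refine .of_hasDerivAt (fun x (hx : 0 < x) => ?_) ?_
    · refine ((Real.hasDerivAt_exp x).div (hasDerivAt_id x) hx.ne').congr_deriv ?_
      simp only [id]
      field_simp
    · have hne : ∀ x ∈ Ioi (0 : ℝ), x ≠ 0 := fun x hx => ne_of_gt hx
      have hne_sq : ∀ x ∈ Ioi (0 : ℝ), x ^ 2 ≠ 0 := fun x hx => pow_ne_zero 2 (hne x hx)
      fun_prop (disch := assumption)
  exact (hquot.sub isACPrimitiveOn_integral_exp_div).congr (fun _ _ => rfl) (fun _ _ => by ring)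

theorem continuousOn_Efun : ContinuousOn Efun (Ioi 0) :=
  isACPrimitiveOn_Efun.continuousOn isOpen_Ioi

theorem Efun_one : Efun 1 = exp 1 := by
  rw [Efun, intervalIntegral.integral_same, div_one, sub_zero]

theorem antitoneOn_Efun : AntitoneOn Efun (Ioi 0) := by
  intro x hx y hy hxy
  have := isACPrimitiveOn_Efun.sub_le_sub (.const 0 _) hx hy hxy
    fun t _ => neg_nonpos.2 (by positivity)
  linarith

theorem exp_le_three_of_le_one {x : ℝ} (hx : x ≤ 1) : exp x ≤ 3 :=
  (exp_le_exp.2 hx).trans exp_one_lt_three.le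

theorem abs_Efun_le_of_le_one {y : ℝ} (hy : 0 < y) (hy1 : y ≤ 1) : |Efun y| ≤ 3 / y := by
  have hnonneg : 0 ≤ Efun y :=
    (exp_pos 1).le.trans (Efun_one.symm.trans_le (antitoneOn_Efun hy (mem_Ioi.2 one_pos) hy1))
  have hinv : IsACPrimitiveOn (fun y => 3 / y) (fun y => -(3 / y ^ 2)) (Ioi 0) := by
    refine .of_hasDerivAt (fun x (hx : 0 < x) => ?_) ?_
    · exact ((hasDerivAt_inv hx.ne').const_mul 3).congr_deriv (by ring)
    · have hne : ∀ x ∈ Ioi (0 : ℝ), x ^ 2 ≠ 0 := fun x hx => pow_ne_zero 2 (ne_of_gt hx)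
      fun_prop (disch := assumption)
  have hcomp := hinv.sub_le_sub isACPrimitiveOn_Efun hy (mem_Ioi.2 one_pos) hy1 fun t ht => by
    gcongr
    exact exp_le_three_of_le_one ht.2
  rw [Efun_one, div_one] at hcomp
  rw [abs_of_nonneg hnonneg]
  linarith [exp_one_lt_three]

theorem neg_Efun_le {x : ℝ} (hx : 1 ≤ x) : -Efun x ≤ 50 * (exp x / x ^ 2) := by
  have hexp : IsACPrimitiveOn (fun t => 50 * (exp x / x ^ 2) * exp ((t - x) / 2))
      (fun t => 25 * (exp x / x ^ 2) * exp ((t - x) / 2)) (Ioi 0) :=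
    .of_hasDerivAt (fun t _ => (((((hasDerivAt_id t).sub_const x).div_const 2).exp).const_mul
      (50 * (exp x / x ^ 2))).congr_deriv (by simp only [id]; ring)) (by fun_prop)
  have hcomp := (isACPrimitiveOn_Efun.const_mul (-1)).sub_le_sub hexp (mem_Ioi.2 one_pos)
    (mem_Ioi.2 (one_pos.trans_le hx)) hx fun t ht => by
      rw [neg_one_mul, neg_neg]
      exact exp_div_sq_le ht.1 ht.2
  simp only [Efun_one, sub_self, zero_div, exp_zero, mul_one] at hcomp
  have hpos : 0 ≤ 50 * (exp x / x ^ 2) * exp ((1 - x) / 2) := by positivity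
  linarith [exp_pos 1]

theorem abs_Efun_le_of_one_le {x : ℝ} (hx : 1 ≤ x) : |Efun x| ≤ 50 * (exp x / x ^ 2) := by
  refine abs_le'.2 ⟨?_, neg_Efun_le hx⟩
  have hx_pos : 0 < x := by linarith
  calc Efun x ≤ exp 1 / 1 ^ 2 := by
        rw [one_pow, div_one, ← Efun_one]
        exact antitoneOn_Efun (mem_Ioi.2 one_pos) hx_pos hx
    _ ≤ 25 * (exp x / x ^ 2) := exp_div_sq_le_exp_div_sq le_rfl hx
    _ ≤ 50 * (exp x / x ^ 2) := by
        gcongr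
        norm_num

theorem abs_m1_le_one {x : ℝ} (hx : 0 ≤ x) : |m1 x| ≤ 1 := by
  have habs : |1 - x| ≤ exp x := by
    rw [abs_le]
    constructor <;> linarith [add_one_le_exp x]
  calc |m1 x| = |1 - x| * exp (-x) := by rw [m1, abs_mul, abs_of_pos (exp_pos _)]
    _ ≤ exp x * exp (-x) := by gcongr
    _ = 1 := by rw [mul_comm, exp_neg_mul_exp]

theorem abs_m1_le_mul_exp_neg {x : ℝ} (hx : 1 ≤ x) : |m1 x| ≤ x * exp (-x) := by
  rw [m1, abs_mul, abs_of_pos (exp_pos _), abs_of_nonpos (by linarith)]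
  gcongr
  linarith

theorem m2_eq {x : ℝ} (hx : x ≠ 0) : m2 x = x⁻¹ - m1 x * Efun x := by
  simp only [m2, m1, Efun]
  field_simp
  linear_combination (1 - x) * exp_neg_mul_exp x

theorem abs_m2_le_of_one_le {x : ℝ} (hx : 1 ≤ x) : |m2 x| ≤ 51 / x := by
  have hx_pos : 0 < x := by linarith
  have hprod : |m1 x * Efun x| ≤ 50 / x := by
    calc |m1 x * Efun x| ≤ x * exp (-x) * (50 * (exp x / x ^ 2)) := by
          rw [abs_mul]
          gcongr
          exacts [abs_m1_le_mul_exp_neg hx, abs_Efun_le_of_one_le hx]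
      _ = exp (-x) * exp x * (50 / x) := by field_simp
      _ = 50 / x := by rw [exp_neg_mul_exp, one_mul]
  calc |m2 x| ≤ |x⁻¹| + |m1 x * Efun x| := by
        rw [m2_eq hx_pos.ne']
        exact abs_sub _ _
    _ ≤ x⁻¹ + 50 / x := by
        rw [abs_of_pos (inv_pos.2 hx_pos)]
        gcongr
    _ = 51 / x := by ring

theorem abs_integral_exp_div_le {x : ℝ} (hx : 0 < x) (hx1 : x ≤ 1) :
    |∫ z in (1 : ℝ)..x, exp z / z| ≤ -(3 * log x) := by
  have hlog : IsACPrimitiveOn (fun t => 3 * log t) (fun t => 3 * t⁻¹) (Ioi 0) := by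
    refine .of_hasDerivAt (fun t ht => (hasDerivAt_log (ne_of_gt ht)).const_mul 3) ?_
    have hne : ∀ t ∈ Ioi (0 : ℝ), t ≠ 0 := fun t ht => ne_of_gt ht
    fun_prop (disch := assumption)
  have hone : (1 : ℝ) ∈ Ioi 0 := mem_Ioi.2 one_pos
  have hlower := isACPrimitiveOn_integral_exp_div.sub_le_sub hlog hx hone hx1 fun t ht => by
    rw [div_eq_mul_inv]
    have ht_pos : 0 < t := hx.trans_le ht.1
    gcongr
    exact exp_le_three_of_le_one ht.2
  have hupper := (IsACPrimitiveOn.const 0 (Ioi 0)).sub_le_sub isACPrimitiveOn_integral_exp_div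
    hx hone hx1 fun t ht => div_nonneg (exp_pos t).le (hx.le.trans ht.1)
  simp only [intervalIntegral.integral_same, log_one, mul_zero, zero_sub] at hlower hupper
  rw [abs_le]
  constructor <;> linarith

theorem abs_m2_le_of_le_one {d x : ℝ} (hd : 0 < d) (hx : 0 < x) (hx1 : x ≤ 1) :
    |m2 x| ≤ (1 + 3 / d) * x ^ (-d) := by
  have hlog : -log x ≤ x ^ (-d) / d := by
    rw [← log_inv, rpow_neg hx.le, ← inv_rpow hx.le]
    exact log_le_rpow_div (inv_nonneg.2 hx.le) hd
  have hone : 1 ≤ x ^ (-d) := one_le_rpow_of_pos_of_le_one_of_nonpos hx hx1 (by linarith)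
  calc |m2 x| ≤ 1 + |m1 x| * |∫ z in (1 : ℝ)..x, exp z / z| := by
        rw [← abs_mul, m2, ← m1]
        exact (abs_add_le _ _).trans_eq (by rw [abs_one])
    _ ≤ 1 + 1 * -(3 * log x) := by
        gcongr
        exacts [abs_m1_le_one hx.le, abs_integral_exp_div_le hx hx1]
    _ ≤ x ^ (-d) + 3 * (x ^ (-d) / d) := by linarith
    _ = (1 + 3 / d) * x ^ (-d) := by ring

/-! ### The right inverse -/

/-- The primitive of `E g` that enters `Aop g` with the coefficient `2 m₁`. -/
noncomputable def integralEfunMul (g : ℝ → ℝ) (x : ℝ) : ℝ := ∫ y in (1 : ℝ)..x, Efun y * g y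

/-- The solution `V` of `V' = e^x x⁻² ∫ₓ^∞ g` whose constant of integration is the one selected
by the normalisation of `A0op g`. It equals `x⁻² expTail (A0op g) x`. -/
noncomputable def odeSol (g : ℝ → ℝ) (x : ℝ) : ℝ :=
  -((∫ y in Ioi (0 : ℝ), y * Aop g y) / 2) - tail g x * Efun x - integralEfunMul g x

theorem A0op_eq (g : ℝ → ℝ) {x : ℝ} (hx : x ≠ 0) :
    A0op g x = g x - 2 * m1 x * odeSol g x - 2 / x * tail g x := by
  rw [A0op, Aop, m2_eq hx, odeSol, integralEfunMul, tail]
  ring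

namespace HasFirstMoment

variable {g : ℝ → ℝ}

theorem abs_tail_le (hg : HasFirstMoment g) {x y : ℝ} (hx : 0 < x) (hxy : x ≤ y) :
    |tail g y| ≤ tail (fun t => |g t|) x :=
  abs_integral_le_integral_abs.trans <|
    setIntegral_mono_set (hg.abs.integrableOn_Ioi hx) (.of_forall fun _ => abs_nonneg _)
      (Ioi_subset_Ioi hxy).eventuallyLE

theorem isACPrimitiveOn_integralEfunMul (hg : HasFirstMoment g) :
    IsACPrimitiveOn (integralEfunMul g) (fun y => Efun y * g y) (Ioi 0) :=
  .of_intervalIntegrable fun x hx => by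
    have hone : (1 : ℝ) ∈ Ioi 0 := mem_Ioi.2 one_pos
    have hint : IntervalIntegrable g volume 1 x := by
      simpa only [neg_one_mul, neg_neg] using
        (hg.isACPrimitiveOn_tail.intervalIntegrable hone hx).const_mul (-1)
    exact hint.continuousOn_mul (continuousOn_Efun.mono (ordConnected_Ioi.uIcc_subset hone hx))

theorem abs_integralEfunMul_le_of_le_one (hg : HasFirstMoment g) {x : ℝ} (hx : 0 < x)
    (hx1 : x ≤ 1) : |integralEfunMul g x| ≤ 3 / x * tail (fun t => |g t|) x := by
  have hint : IntegrableOn (fun y => 3 / x * |g y|) (Ioi x) :=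
    (hg.abs.integrableOn_Ioi hx).const_mul _
  rw [integralEfunMul, intervalIntegral.integral_symm, abs_neg,
    intervalIntegral.integral_of_le hx1]
  calc |∫ y in Ioc x 1, Efun y * g y| ≤ ∫ y in Ioc x 1, 3 / x * |g y| := by
        refine (norm_eq_abs _).symm.trans_le
          (norm_integral_le_of_norm_le (hint.mono_set Ioc_subset_Ioi_self) ?_)
        filter_upwards [ae_restrict_mem measurableSet_Ioc] with y hy
        rw [norm_mul, norm_eq_abs, norm_eq_abs]
        gcongr
        exact (abs_Efun_le_of_le_one (hx.trans hy.1) hy.2).trans (by gcongr; exact hy.1.le)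
    _ ≤ ∫ y in Ioi x, 3 / x * |g y| :=
        setIntegral_mono_set hint (.of_forall fun y => by positivity)
          Ioc_subset_Ioi_self.eventuallyLE
    _ = 3 / x * tail (fun t => |g t|) x := integral_const_mul _ _

theorem isACPrimitiveOn_odeSol (hg : HasFirstMoment g) :
    IsACPrimitiveOn (odeSol g) (fun x => exp x / x ^ 2 * tail g x) (Ioi 0) :=
  (((IsACPrimitiveOn.const _ _).sub (hg.isACPrimitiveOn_tail.mul isACPrimitiveOn_Efun)).sub
    hg.isACPrimitiveOn_integralEfunMul).congr (fun _ _ => rfl) (fun x _ => by ring)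

theorem abs_odeSol_sub_le (hg : HasFirstMoment g) {x : ℝ} (hx : 1 ≤ x) :
    |odeSol g x - odeSol g 1| ≤ tail (fun t => |g t|) 1 * (Efun 1 - Efun x) := by
  have hone : (1 : ℝ) ∈ Ioi 0 := mem_Ioi.2 one_pos
  have hx_mem : x ∈ Ioi (0 : ℝ) := one_pos.trans_le hx
  have hbound {t : ℝ} (ht : 1 ≤ t) := abs_le.1 (hg.abs_tail_le one_pos ht)
  have hpos (t : ℝ) : 0 ≤ exp t / t ^ 2 := by positivity
  have hE (c : ℝ) := isACPrimitiveOn_Efun.const_mul c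
  have hupper := hg.isACPrimitiveOn_odeSol.sub_le_sub (hE (-tail (fun t => |g t|) 1)) hone
    hx_mem hx fun t ht => by nlinarith [hpos t, (hbound ht.1).2]
  have hlower := (hE (tail (fun t => |g t|) 1)).sub_le_sub hg.isACPrimitiveOn_odeSol hone
    hx_mem hx fun t ht => by nlinarith [hpos t, (hbound ht.1).1]
  rw [abs_le]
  constructor <;> linarith

theorem tendsto_mul_exp_neg_mul_odeSol_atTop (hg : HasFirstMoment g) :
    Tendsto (fun x => x * exp (-x) * odeSol g x) atTop (𝓝 0) := by
  set M := tail (fun t => |g t|) 1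
  have hM : 0 ≤ M := (abs_nonneg _).trans (hg.abs_tail_le one_pos le_rfl)
  have hlim : Tendsto (fun x => (|odeSol g 1| + M * exp 1) * (x * exp (-x)) + 50 * M / x)
      atTop (𝓝 0) := by
    have hexp : Tendsto (fun x => x * exp (-x)) atTop (𝓝 0) := by
      simpa only [pow_one] using tendsto_pow_mul_exp_neg_atTop_nhds_zero 1
    simpa only [mul_zero, add_zero] using!
      (hexp.const_mul (|odeSol g 1| + M * exp 1)).add
        (tendsto_const_nhds.div_atTop (tendsto_id (α := ℝ)))
  refine squeeze_zero_norm' ?_ hlim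
  filter_upwards [eventually_ge_atTop 1] with x hx
  have : 0 < x := by linarith
  have hV : |odeSol g x| ≤ |odeSol g 1| + M * (exp 1 + 50 * (exp x / x ^ 2)) := by
    have hE : Efun 1 - Efun x ≤ exp 1 + 50 * (exp x / x ^ 2) := by
      linarith [Efun_one, neg_Efun_le hx]
    linarith [abs_sub_abs_le_abs_sub (odeSol g x) (odeSol g 1), hg.abs_odeSol_sub_le hx,
      mul_le_mul_of_nonneg_left hE hM]
  calc ‖x * exp (-x) * odeSol g x‖
      ≤ x * exp (-x) * (|odeSol g 1| + M * (exp 1 + 50 * (exp x / x ^ 2))) := by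
        rw [norm_mul, norm_of_nonneg (by positivity), norm_eq_abs]
        gcongr
    _ = (|odeSol g 1| + M * exp 1) * (x * exp (-x)) + exp (-x) * exp x * (50 * M / x) := by
        field_simp
        ring
    _ = (|odeSol g 1| + M * exp 1) * (x * exp (-x)) + 50 * M / x := by
        rw [exp_neg_mul_exp, one_mul]

theorem tendsto_sq_mul_odeSol_nhdsGT_zero (hg : HasFirstMoment g) :
    Tendsto (fun x => x ^ 2 * odeSol g x) (𝓝[>] 0) (𝓝 0) := by
  set c := (∫ y in Ioi (0 : ℝ), y * Aop g y) / 2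
  have hlim : Tendsto (fun x => x ^ 2 * |c| + 6 * (x * tail (fun t => |g t|) x)) (𝓝[>] 0)
      (𝓝 0) := by
    have hsq : Tendsto (fun x : ℝ => x ^ 2 * |c|) (𝓝[>] 0) (𝓝 0) :=
      ((by fun_prop : Continuous fun x : ℝ => x ^ 2 * |c|).tendsto' 0 0 (by simp)).mono_left
        nhdsWithin_le_nhds
    simpa only [mul_zero, add_zero] using
      hsq.add (hg.abs.tendsto_mul_tail_nhdsGT_zero.const_mul 6)
  refine squeeze_zero_norm' ?_ hlim
  filter_upwards [Ioc_mem_nhdsGT one_pos] with x ⟨hx, hx1⟩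
  have hprod : |tail g x * Efun x| ≤ tail (fun t => |g t|) x * (3 / x) := by
    rw [abs_mul]
    gcongr
    exacts [(abs_nonneg _).trans (hg.abs_tail_le hx le_rfl), hg.abs_tail_le hx le_rfl,
      abs_Efun_le_of_le_one hx hx1]
  have hV : |odeSol g x| ≤ |c| + tail (fun t => |g t|) x * (3 / x) +
      3 / x * tail (fun t => |g t|) x := by
    have hsub₁ := abs_sub (-c - tail g x * Efun x) (integralEfunMul g x)
    have hsub₂ := abs_sub (-c) (tail g x * Efun x)
    rw [abs_neg] at hsub₂
    rw [odeSol]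
    linarith [hg.abs_integralEfunMul_le_of_le_one hx hx1]
  calc ‖x ^ 2 * odeSol g x‖ ≤ x ^ 2 * (|c| + tail (fun t => |g t|) x * (3 / x) +
        3 / x * tail (fun t => |g t|) x) := by
        rw [norm_mul, norm_of_nonneg (by positivity), norm_eq_abs]
        gcongr
    _ = x ^ 2 * |c| + 6 * (x * tail (fun t => |g t|) x) := by
        field_simp
        ring

theorem tail_A0op_eqOn (hg : HasFirstMoment g) (hA : HasFirstMoment (A0op g)) :
    EqOn (tail (A0op g)) (fun x => 2 * (x * exp (-x) * odeSol g x) + tail g x) (Ioi 0) := by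
  have hprim : IsACPrimitiveOn (fun x => 2 * (x * exp (-x) * odeSol g x) + tail g x)
      (fun x => -A0op g x) (Ioi 0) := by
    refine (((isACPrimitiveOn_mul_exp_neg.mul hg.isACPrimitiveOn_odeSol).const_mul 2).add
      hg.isACPrimitiveOn_tail).congr (fun _ _ => rfl) (fun x (hx : 0 < x) => ?_)
    have hcancel : x * exp (-x) * (exp x / x ^ 2 * tail g x) = tail g x / x := by
      field_simp
      linear_combination tail g x * exp_neg_mul_exp x
    simp only [A0op_eq g hx.ne', hcancel]
    ring
  refine hA.isACPrimitiveOn_tail.eqOn_of_tendsto hprim (eventually_gt_atTop 0)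
    hA.tendsto_tail_atTop ?_
  simpa only [mul_zero, add_zero] using
    (hg.tendsto_mul_exp_neg_mul_odeSol_atTop.const_mul 2).add hg.tendsto_tail_atTop

theorem expTail_A0op_eqOn (hg : HasFirstMoment g) (hA : HasFirstMoment (A0op g)) :
    EqOn (expTail (A0op g)) (fun x => x ^ 2 * odeSol g x) (Ioi 0) := by
  have hsq : IsACPrimitiveOn (fun x => x ^ 2) (fun x => 2 * x) (Ioi 0) :=
    .of_hasDerivAt (fun x _ => (hasDerivAt_pow 2 x).congr_deriv (by norm_num)) (by fun_prop)
  have hprim : IsACPrimitiveOn (fun x => x ^ 2 * odeSol g x)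
      (fun x => exp x * tail (A0op g) x) (Ioi 0) := by
    refine (hsq.mul hg.isACPrimitiveOn_odeSol).congr (fun _ _ => rfl) (fun x hx => ?_)
    have hx_ne : x ≠ 0 := ne_of_gt hx
    simp only [hg.tail_A0op_eqOn hA hx]
    field_simp
    linear_combination (-(2 * x * odeSol g x)) * exp_neg_mul_exp x
  exact hA.isACPrimitiveOn_expTail.eqOn_of_tendsto hprim eventually_mem_nhdsWithin
    hA.tendsto_expTail_nhdsGT_zero hg.tendsto_sq_mul_odeSol_nhdsGT_zero

theorem Lop_A0op_ae_eq (hg : HasFirstMoment g) (hA : HasFirstMoment (A0op g)) :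
    Lop (A0op g) =ᵐ[volume.restrict (Ioi 0)] g := by
  refine (hA.Lop_ae_eq_iff hg).2 fun x (hx : 0 < x) => ?_
  rw [flux, hg.tail_A0op_eqOn hA hx, hg.expTail_A0op_eqOn hA hx]
  field_simp
  ring

end HasFirstMoment

/-! ### The weighted spaces -/

theorem weight_pos (a b : ℝ) {x : ℝ} (hx : 0 < x) : 0 < weight a b x := by
  unfold weight
  split_ifs <;> positivity

theorem measurable_weight (a b : ℝ) : Measurable (weight a b) :=
  .ite measurableSet_Iic (by fun_prop) (by fun_prop)

theorem weight_le_weight {a a' b b' x : ℝ} (ha : a ≤ a') (hb : b' ≤ b) (hx : 0 < x) :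
    weight a' b' x ≤ weight a b x := by
  unfold weight
  split_ifs with hx1
  · exact rpow_le_rpow_of_exponent_ge hx hx1 ha
  · exact rpow_le_rpow_of_exponent_le (not_le.1 hx1).le hb

theorem le_weight {a b x : ℝ} (ha : a ≤ 1) (hb : 1 ≤ b) (hx : 0 < x) : x ≤ weight a b x := by
  have hone : weight 1 1 x = x := by rw [weight, ite_self, rpow_one]
  exact hone.symm.trans_le (weight_le_weight ha hb hx)

theorem weight_add_one (a b : ℝ) {x : ℝ} (hx : 0 < x) :
    weight (a + 1) (b + 1) x = weight a b x * x := by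
  unfold weight
  split_ifs <;> exact rpow_add_one hx.ne' _

theorem weight_le_mul_div_rpow (p q : ℝ) {x y : ℝ} (hx : 0 < x) (hxy : x ≤ y) :
    weight p q x ≤ weight p q y * ((x / y) ^ p + (x / y) ^ q) := by
  have hy : 0 < y := hx.trans_le hxy
  have hscale (r : ℝ) : y ^ r * (x / y) ^ r = x ^ r := by
    rw [← mul_rpow hy.le (by positivity), mul_div_cancel₀ _ hy.ne']
  have hscale_le {r s : ℝ} (hy1 : 1 ≤ y) (hrs : r ≤ s) : x ^ r ≤ y ^ s * (x / y) ^ r := by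
    rw [← hscale r]
    gcongr
  unfold weight
  rw [mul_add]
  split_ifs with hx1 hy1 hy1
  · rw [hscale]
    exact le_add_of_nonneg_right (by positivity)
  · rcases le_total p q with hpq | hqp
    · exact (hscale_le (not_le.1 hy1).le hpq).trans (le_add_of_nonneg_right (by positivity))
    · rw [hscale]
      exact (rpow_le_rpow_of_exponent_ge hx hx1 hqp).trans
        (le_add_of_nonneg_left (by positivity))
  · exact absurd (hxy.trans hy1) hx1
  · rw [hscale q]
    exact le_add_of_nonneg_left (by positivity)

theorem setLIntegral_weight_le {p q y : ℝ} (hp : -1 < p) (hq : -1 < q) (hy : 0 < y) :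
    ∫⁻ x in Ioo 0 y, ENNReal.ofReal (weight p q x) ≤
      ENNReal.ofReal ((1 / (p + 1) + 1 / (q + 1)) * weight (p + 1) (q + 1) y) := by
  have hint {r : ℝ} (hr : -1 < r) : IntervalIntegrable (fun x => (x / y) ^ r) volume 0 y := by
    simpa only [zero_div, zero_mul, one_mul, div_eq_mul_inv, inv_inv] using
      (intervalIntegral.intervalIntegrable_rpow' (a := 0) (b := 1) hr).comp_mul_right
        (c := y⁻¹)
  have hvalue {r : ℝ} (hr : -1 < r) : ∫ x in (0 : ℝ)..y, (x / y) ^ r = y * (1 / (r + 1)) := by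
    rw [intervalIntegral.integral_comp_div (fun x => x ^ r) hy.ne', zero_div, div_self hy.ne',
      integral_rpow (.inl hr), one_rpow, zero_rpow (by linarith), sub_zero, smul_eq_mul]
  have hsum := ((hint hp).add (hint hq)).const_mul (weight p q y)
  have hw := weight_pos p q hy
  calc ∫⁻ x in Ioo 0 y, ENNReal.ofReal (weight p q x)
      ≤ ∫⁻ x in Ioo 0 y, ENNReal.ofReal (weight p q y * ((x / y) ^ p + (x / y) ^ q)) :=
        setLIntegral_mono' measurableSet_Ioo fun x hx =>
          ENNReal.ofReal_le_ofReal (weight_le_mul_div_rpow p q hx.1 hx.2.le)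
    _ = ENNReal.ofReal (∫ x in (0 : ℝ)..y, weight p q y * ((x / y) ^ p + (x / y) ^ q)) := by
        rw [intervalIntegral.integral_of_le hy.le, integral_Ioc_eq_integral_Ioo]
        refine (ofReal_integral_eq_lintegral_ofReal
          (((intervalIntegrable_iff_integrableOn_Ioc_of_le hy.le).1 hsum).mono_set
            Ioo_subset_Ioc_self) ?_).symm
        filter_upwards [ae_restrict_mem measurableSet_Ioo] with x hx
        have hx_pos : 0 < x := hx.1
        positivity
    _ = ENNReal.ofReal ((1 / (p + 1) + 1 / (q + 1)) * weight (p + 1) (q + 1) y) := by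
        rw [intervalIntegral.integral_const_mul, intervalIntegral.integral_add (hint hp) (hint hq),
          hvalue hp, hvalue hq, weight_add_one p q hy]
        ring_nf

theorem setLIntegral_mul_weight_le {u : ℝ → ℝ} {a b c p q y : ℝ} (hp : -1 < p) (hq : -1 < q)
    (hy : 0 < y) (hc : 0 ≤ c)
    (hu : ∀ x, 0 < x → x < y → |u x| * weight a b x ≤ c * weight p q x) :
    ∫⁻ x in Ioo 0 y, ‖u x * weight a b x‖ₑ ≤
      ENNReal.ofReal (c * ((1 / (p + 1) + 1 / (q + 1)) * weight (p + 1) (q + 1) y)) := by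
  calc ∫⁻ x in Ioo 0 y, ‖u x * weight a b x‖ₑ
      ≤ ∫⁻ x in Ioo 0 y, ENNReal.ofReal c * ENNReal.ofReal (weight p q x) := by
        refine setLIntegral_mono' measurableSet_Ioo fun x hx => ?_
        rw [enorm_eq_ofReal_abs, abs_mul, abs_of_pos (weight_pos a b hx.1),
          ← ENNReal.ofReal_mul hc]
        exact ENNReal.ofReal_le_ofReal (hu x hx.1 hx.2)
    _ ≤ _ := by
        rw [lintegral_const_mul' _ _ ENNReal.ofReal_ne_top, ENNReal.ofReal_mul hc]
        gcongr
        exact setLIntegral_weight_le hp hq hy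

/-- The norm of `X_{a,b}` with values in `[0,∞]`, where Tonelli's theorem and the
triangle inequality hold without integrability. -/
noncomputable def Xenorm (a b : ℝ) (g : ℝ → ℝ) : ℝ≥0∞ :=
  ∫⁻ x in Ioi 0, ‖g x * weight a b x‖ₑ

theorem Xenorm_eq (a b : ℝ) (g : ℝ → ℝ) :
    Xenorm a b g = ∫⁻ x in Ioi 0, ‖g x‖ₑ * ENNReal.ofReal (weight a b x) :=
  setLIntegral_congr_fun measurableSet_Ioi fun x hx => by
    simp only [enorm_mul, enorm_eq_ofReal (weight_pos a b hx).le]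

section

variable {a b : ℝ} {g : ℝ → ℝ}

theorem memX_iff :
    MemX a b g ↔ AEStronglyMeasurable g (volume.restrict (Ioi 0)) ∧ Xenorm a b g < ∞ := by
  refine and_congr_left' ⟨fun hg => ?_, fun hg =>
    hg.mul (measurable_weight a b).aestronglyMeasurable⟩
  refine (hg.mul (measurable_weight a b).inv.aestronglyMeasurable).congr ?_
  filter_upwards [ae_restrict_mem measurableSet_Ioi] with x hx
  exact mul_inv_cancel_right₀ (weight_pos a b hx).ne' (g x)

theorem MemX.toReal_Xenorm (hg : MemX a b g) : (Xenorm a b g).toReal = Xnorm a b g := by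
  rw [Xenorm, ← integral_norm_eq_lintegral_enorm (Integrable.aestronglyMeasurable hg), Xnorm]
  refine setIntegral_congr_fun measurableSet_Ioi fun x hx => ?_
  rw [norm_mul, norm_eq_abs, norm_of_nonneg (weight_pos a b hx).le]

theorem lintegral_enorm_mul_le_Xenorm (ha : a ≤ 1) (hb : 1 ≤ b) (g : ℝ → ℝ) :
    ∫⁻ x in Ioi 0, ‖x * g x‖ₑ ≤ Xenorm a b g := by
  rw [Xenorm_eq]
  refine setLIntegral_mono' measurableSet_Ioi fun x (hx : 0 < x) => ?_
  rw [enorm_mul, mul_comm, enorm_eq_ofReal hx.le]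
  gcongr
  exact le_weight ha hb hx

theorem MemX.hasFirstMoment (ha : a ≤ 1) (hb : 1 ≤ b) (hg : MemX a b g) : HasFirstMoment g :=
  ⟨(measurable_id.aestronglyMeasurable).mul (memX_iff.1 hg).1,
    (lintegral_enorm_mul_le_Xenorm ha hb g).trans_lt (memX_iff.1 hg).2⟩

theorem memX_m1 (ha : -1 < a) (hb : -1 < b) : MemX a b m1 := by
  refine Integrable.mono' ((integrableOn_m1_mul_rpow ha).abs.add (integrableOn_m1_mul_rpow hb).abs)
    (continuous_m1.aestronglyMeasurable.mul (measurable_weight a b).aestronglyMeasurable) ?_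
  refine .of_forall fun x => ?_
  unfold weight
  simp only [Pi.add_apply, norm_eq_abs]
  split_ifs
  · exact le_add_of_nonneg_right (abs_nonneg _)
  · exact le_add_of_nonneg_left (abs_nonneg _)

end

/-! ### Bounded operators on the weighted spaces -/

/-- `T` is a bounded operator on `X_{a,b}`. The bound is stated in `[0,∞]`, so that membership of
`T g` in `X_{a,b}` only leaves measurability to be asserted. -/
def BoundedOnX (a b : ℝ) (T : (ℝ → ℝ) → ℝ → ℝ) : Prop :=
  ∃ C : ℝ≥0, ∀ g, MemX a b g →
    AEStronglyMeasurable (T g) (volume.restrict (Ioi 0)) ∧ Xenorm a b (T g) ≤ C * Xenorm a b g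

namespace BoundedOnX

variable {a b : ℝ} {T S : (ℝ → ℝ) → ℝ → ℝ}

theorem memX (hT : BoundedOnX a b T) {g : ℝ → ℝ} (hg : MemX a b g) : MemX a b (T g) := by
  obtain ⟨C, hC⟩ := hT
  exact memX_iff.2 ⟨(hC g hg).1,
    (hC g hg).2.trans_lt (ENNReal.mul_lt_top ENNReal.coe_lt_top (memX_iff.1 hg).2)⟩

theorem exists_Xnorm_le (hT : BoundedOnX a b T) :
    ∃ C > (0 : ℝ), ∀ g, MemX a b g → Xnorm a b (T g) ≤ C * Xnorm a b g := by
  have hmem {g : ℝ → ℝ} (hg : MemX a b g) := hT.memX hg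
  obtain ⟨C, hC⟩ := hT
  refine ⟨C + 1, by positivity, fun g hg => ?_⟩
  have hfinite : C * Xenorm a b g ≠ ∞ :=
    ENNReal.mul_ne_top ENNReal.coe_ne_top (memX_iff.1 hg).2.ne
  have hle := ENNReal.toReal_mono hfinite (hC g hg).2
  rw [ENNReal.toReal_mul, ENNReal.coe_toReal, hg.toReal_Xenorm, (hmem hg).toReal_Xenorm] at hle
  have hnonneg : 0 ≤ Xnorm a b g := hg.toReal_Xenorm ▸ ENNReal.toReal_nonneg
  linarith

theorem id : BoundedOnX a b fun g => g :=
  ⟨1, fun g hg => ⟨(memX_iff.1 hg).1, by rw [ENNReal.coe_one, one_mul]⟩⟩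

theorem add (hT : BoundedOnX a b T) (hS : BoundedOnX a b S) :
    BoundedOnX a b fun g x => T g x + S g x := by
  obtain ⟨C, hC⟩ := hT
  obtain ⟨D, hD⟩ := hS
  refine ⟨C + D, fun g hg => ⟨(hC g hg).1.add (hD g hg).1, ?_⟩⟩
  have hmeas := ((hC g hg).1.mul (measurable_weight a b).aestronglyMeasurable).enorm
  calc Xenorm a b (fun x => T g x + S g x)
      ≤ ∫⁻ x in Ioi 0, (‖T g x * weight a b x‖ₑ + ‖S g x * weight a b x‖ₑ) :=
        lintegral_mono fun x => by
          rw [add_mul]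
          exact enorm_add_le _ _
    _ = Xenorm a b (T g) + Xenorm a b (S g) := lintegral_add_left' hmeas _
    _ ≤ C * Xenorm a b g + D * Xenorm a b g := add_le_add (hC g hg).2 (hD g hg).2
    _ = ↑(C + D) * Xenorm a b g := by rw [ENNReal.coe_add, add_mul]

theorem const_mul (hT : BoundedOnX a b T) (c : ℝ) : BoundedOnX a b fun g x => c * T g x := by
  obtain ⟨C, hC⟩ := hT
  refine ⟨‖c‖₊ * C, fun g hg => ⟨(hC g hg).1.const_mul c, ?_⟩⟩
  calc Xenorm a b (fun x => c * T g x) = ‖c‖ₑ * Xenorm a b (T g) := by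
        simp only [Xenorm, mul_assoc, enorm_mul c]
        exact lintegral_const_mul' _ _ enorm_ne_top
    _ ≤ ‖c‖ₑ * (C * Xenorm a b g) := by
        gcongr
        exact (hC g hg).2
    _ = ↑(‖c‖₊ * C) * Xenorm a b g := by
        rw [ENNReal.coe_mul, mul_assoc]
        rfl

theorem congr (hT : BoundedOnX a b T) (h : ∀ g, EqOn (T g) (S g) (Ioi 0)) :
    BoundedOnX a b S := by
  obtain ⟨C, hC⟩ := hT
  refine ⟨C, fun g hg => ⟨(hC g hg).1.congr ?_, ?_⟩⟩
  · filter_upwards [ae_restrict_mem measurableSet_Ioi] with x hx using h g hx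
  · refine Eq.trans_le (setLIntegral_congr_fun measurableSet_Ioi fun x hx => ?_) (hC g hg).2
    simp only [h g hx]

theorem firstMoment_mul (ha : a ≤ 1) (hb : 1 ≤ b) (hT : BoundedOnX a b T) {φ : ℝ → ℝ}
    (hφ : MemX a b φ) : BoundedOnX a b fun g x => (∫ y in Ioi (0 : ℝ), y * T g y) * φ x := by
  obtain ⟨C, hC⟩ := hT
  obtain ⟨hφ_meas, hφ_lt⟩ := memX_iff.1 hφ
  lift Xenorm a b φ to ℝ≥0 using hφ_lt.ne with D hD
  refine ⟨C * D, fun g hg => ⟨hφ_meas.const_mul _, ?_⟩⟩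
  set k := ∫ y in Ioi (0 : ℝ), y * T g y
  have hk : ‖k‖ₑ ≤ C * Xenorm a b g := (enorm_integral_le_lintegral_enorm _).trans <|
    (lintegral_enorm_mul_le_Xenorm ha hb _).trans (hC g hg).2
  calc Xenorm a b (fun x => k * φ x) = ‖k‖ₑ * Xenorm a b φ := by
        simp only [Xenorm, mul_assoc, enorm_mul k]
        exact lintegral_const_mul' _ _ enorm_ne_top
    _ ≤ C * Xenorm a b g * D := by
        rw [← hD]
        gcongr
    _ = ↑(C * D) * Xenorm a b g := by
        rw [ENNReal.coe_mul]
        ring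

/- Schur's test for `L¹`: Tonelli's theorem reduces the bound to the weighted integrals of the
columns of the kernel `u(x) 1_s(x, y) e(y)`. -/
theorem mul_setIntegral {s : Set (ℝ × ℝ)} (hs : MeasurableSet s) {u e : ℝ → ℝ} {C : ℝ}
    (hu : AEStronglyMeasurable u (volume.restrict (Ioi 0)))
    (he : AEStronglyMeasurable e (volume.restrict (Ioi 0)))
    (hcol : ∀ y > 0, ‖e y‖ₑ * ∫⁻ x in (fun x => (x, y)) ⁻¹' s ∩ Ioi 0, ‖u x * weight a b x‖ₑ ≤
      ENNReal.ofReal (C * weight a b y)) :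
    BoundedOnX a b fun g x => u x * ∫ y in Prod.mk x ⁻¹' s ∩ Ioi 0, e y * g y := by
  have hslice (x : ℝ) : MeasurableSet (Prod.mk x ⁻¹' s) := measurable_prodMk_left hs
  have hslice' (y : ℝ) : MeasurableSet ((fun x => (x, y)) ⁻¹' s) := measurable_prodMk_right hs
  refine ⟨C.toNNReal, fun g hg => ?_⟩
  have hg_meas := (memX_iff.1 hg).1
  have heg := he.mul hg_meas
  simp only [← Measure.restrict_restrict (hslice _), ← Measure.restrict_restrict (hslice' _)]
    at hcol ⊢
  constructor
  · simp only [← integral_indicator (hslice _)]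
    exact hu.mul ((heg.comp_snd.indicator hs).integral_prod_right')
  calc Xenorm a b (fun x => u x * ∫ y in Prod.mk x ⁻¹' s, e y * g y ∂volume.restrict (Ioi 0))
      ≤ ∫⁻ x in Ioi 0, ‖u x * weight a b x‖ₑ *
          ∫⁻ y in Prod.mk x ⁻¹' s, ‖e y * g y‖ₑ ∂volume.restrict (Ioi 0) := by
        refine lintegral_mono fun x => ?_
        rw [mul_right_comm, enorm_mul]
        gcongr
        exact enorm_integral_le_lintegral_enorm _
    _ = ∫⁻ y in Ioi 0, ‖e y * g y‖ₑ *
          ∫⁻ x in (fun x => (x, y)) ⁻¹' s, ‖u x * weight a b x‖ₑ ∂volume.restrict (Ioi 0) :=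
        lintegral_mul_setLIntegral_comm hs
          (hu.mul (measurable_weight a b).aestronglyMeasurable).enorm heg.enorm
    _ ≤ ∫⁻ y in Ioi 0, ENNReal.ofReal C * (‖g y‖ₑ * ENNReal.ofReal (weight a b y)) := by
        refine setLIntegral_mono' measurableSet_Ioi fun y hy => ?_
        rw [enorm_mul, mul_comm ‖e y‖ₑ, mul_assoc, mul_left_comm (ENNReal.ofReal C),
          ← ENNReal.ofReal_mul' (weight_pos a b hy).le]
        gcongr
        exact hcol y hy
    _ = C.toNNReal * Xenorm a b g := by
        rw [lintegral_const_mul' _ _ ENNReal.ofReal_ne_top, Xenorm_eq, ENNReal.ofReal]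

end BoundedOnX

theorem enorm_Efun_mul_setLIntegral_Ioi_le {a b y : ℝ} (hb : -1 ≤ b) (hy : 1 < y) :
    ‖Efun y‖ₑ * ∫⁻ x in Ioi y, ‖m1 x * weight a b x‖ₑ ≤
      ENNReal.ofReal (100 * (2 * (b + 1) + 1) ^ (b + 1) * weight a b y) := by
  have hy_pos : 0 < y := by linarith
  set K := (2 * (b + 1) + 1) ^ (b + 1)
  have hK : 0 ≤ K := rpow_nonneg (by linarith) _
  have hcol : ∫⁻ x in Ioi y, ‖m1 x * weight a b x‖ₑ ≤
      ENNReal.ofReal (2 * K * (y ^ (b + 1) * exp (-y))) := by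
    refine le_trans (setLIntegral_mono' measurableSet_Ioi fun x (hx : y < x) => ?_)
      (setLIntegral_Ioi_rpow_mul_exp_neg_le (by linarith) hy.le)
    have hx1 : 1 < x := hy.trans hx
    have hx_pos : 0 < x := by linarith
    rw [enorm_eq_ofReal_abs, abs_mul, weight, if_neg hx1.not_ge,
      abs_of_pos (rpow_pos_of_pos hx_pos b)]
    refine ENNReal.ofReal_le_ofReal ?_
    calc |m1 x| * x ^ b ≤ x * exp (-x) * x ^ b := by
          gcongr
          exact abs_m1_le_mul_exp_neg hx1.le
      _ = x ^ (b + 1) * exp (-x) := by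
          rw [rpow_add_one hx_pos.ne']
          ring
  calc ‖Efun y‖ₑ * ∫⁻ x in Ioi y, ‖m1 x * weight a b x‖ₑ
      ≤ ENNReal.ofReal (50 * (exp y / y ^ 2)) *
          ENNReal.ofReal (2 * K * (y ^ (b + 1) * exp (-y))) := by
        gcongr
        rw [enorm_eq_ofReal_abs]
        exact ENNReal.ofReal_le_ofReal (abs_Efun_le_of_one_le hy.le)
    _ = ENNReal.ofReal (100 * K * (y ^ b / y)) := by
        rw [← ENNReal.ofReal_mul (by positivity), rpow_add_one hy_pos.ne']
        congr 1
        field_simp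
        linear_combination 100 * K * exp_neg_mul_exp y
    _ ≤ ENNReal.ofReal (100 * K * weight a b y) := by
        rw [weight, if_neg hy.not_ge]
        gcongr
        exact div_le_self (by positivity) hy.le

theorem enorm_Efun_mul_setLIntegral_Ioo_le {a b y : ℝ} (ha : -1 < a) (hb : -1 < b) (hy : 0 < y)
    (hy1 : y ≤ 1) :
    ‖Efun y‖ₑ * ∫⁻ x in Ioo 0 y, ‖m1 x * weight a b x‖ₑ ≤
      ENNReal.ofReal (3 * (1 / (a + 1) + 1 / (b + 1)) * weight a b y) := by
  have hcol := setLIntegral_mul_weight_le (u := m1) (c := 1) ha hb hy zero_le_one fun x hx _ =>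
    mul_le_mul_of_nonneg_right (abs_m1_le_one hx.le) (weight_pos a b hx).le
  calc ‖Efun y‖ₑ * ∫⁻ x in Ioo 0 y, ‖m1 x * weight a b x‖ₑ
      ≤ ENNReal.ofReal (3 / y) *
          ENNReal.ofReal (1 * ((1 / (a + 1) + 1 / (b + 1)) * weight (a + 1) (b + 1) y)) := by
        gcongr
        rw [enorm_eq_ofReal_abs]
        exact ENNReal.ofReal_le_ofReal (abs_Efun_le_of_le_one hy hy1)
    _ = ENNReal.ofReal (3 * (1 / (a + 1) + 1 / (b + 1)) * weight a b y) := by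
        rw [← ENNReal.ofReal_mul (by positivity), weight_add_one a b hy]
        congr 1
        field_simp

theorem abs_m2_mul_weight_le {a b d x : ℝ} (hd : 0 < d) (hx : 0 < x) :
    |m2 x| * weight a b x ≤ (51 + 3 / d) * weight (a - d) (b - 1) x := by
  have hd_inv : 0 < 3 / d := by positivity
  unfold weight
  split_ifs with hx1
  · calc |m2 x| * x ^ a ≤ (1 + 3 / d) * x ^ (-d) * x ^ a := by
          gcongr
          exact abs_m2_le_of_le_one hd hx hx1
      _ = (1 + 3 / d) * x ^ (a - d) := by
          rw [mul_assoc, ← rpow_add hx, neg_add_eq_sub]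
      _ ≤ (51 + 3 / d) * x ^ (a - d) := by
          gcongr
          norm_num
  · calc |m2 x| * x ^ b ≤ 51 / x * x ^ b := by
          gcongr
          exact abs_m2_le_of_one_le (not_le.1 hx1).le
      _ = 51 * x ^ (b - 1) := by
          rw [rpow_sub_one hx.ne']
          ring
      _ ≤ (51 + 3 / d) * x ^ (b - 1) := by
          gcongr
          linarith

theorem exists_setLIntegral_m2_mul_weight_le {a b : ℝ} (ha : a ∈ Ioc (-1 : ℝ) 1) (hb : 0 < b) :
    ∃ C : ℝ, ∀ y > 0, ∫⁻ x in Ioo 0 y, ‖m2 x * weight a b x‖ₑ ≤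
      ENNReal.ofReal (C * weight a b y) := by
  have hd : 0 < (a + 1) / 2 := by linarith [ha.1]
  set d := (a + 1) / 2 with hd_def
  set c := 1 / (a - d + 1) + 1 / (b - 1 + 1)
  have hc : 0 ≤ c := add_nonneg (one_div_nonneg.2 (by linarith)) (one_div_nonneg.2 (by linarith))
  refine ⟨(51 + 3 / d) * c, fun y hy => ?_⟩
  refine (setLIntegral_mul_weight_le (by linarith) (by linarith) hy (by positivity)
    fun x hx _ => abs_m2_mul_weight_le hd hx).trans (ENNReal.ofReal_le_ofReal ?_)
  rw [← mul_assoc]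
  gcongr
  exact weight_le_weight (by linarith [ha.2]) (by linarith) hy

theorem continuousOn_m2 : ContinuousOn m2 (Ioi 0) :=
  continuousOn_const.add <| continuous_m1.continuousOn.mul <|
    isACPrimitiveOn_integral_exp_div.continuousOn isOpen_Ioi

theorem integralEfunMul_eq (g : ℝ → ℝ) (x : ℝ) :
    integralEfunMul g x = (∫ y in Ioo 1 x, Efun y * g y) - ∫ y in Ioc x 1, Efun y * g y := by
  rw [integralEfunMul, intervalIntegral, integral_Ioc_eq_integral_Ioo]

theorem boundedOnX_m1_mul_setIntegral_Ioo {a b : ℝ} (hb : -1 ≤ b) :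
    BoundedOnX a b fun g x => m1 x * ∫ y in Ioo 1 x, Efun y * g y := by
  have hs : MeasurableSet {p : ℝ × ℝ | 1 < p.2 ∧ p.2 < p.1} :=
    (measurableSet_lt measurable_const measurable_snd).inter
      (measurableSet_lt measurable_snd measurable_fst)
  have hslice (x : ℝ) : Prod.mk x ⁻¹' {p : ℝ × ℝ | 1 < p.2 ∧ p.2 < p.1} ∩ Ioi 0 = Ioo 1 x :=
    inter_eq_left.2 fun y hy => one_pos.trans hy.1
  refine .congr (.mul_setIntegral (C := 100 * (2 * (b + 1) + 1) ^ (b + 1)) hs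
    continuous_m1.aestronglyMeasurable
    (continuousOn_Efun.aestronglyMeasurable measurableSet_Ioi) fun y _ => ?_)
    fun g x _ => by rw [hslice]
  by_cases hy1 : 1 < y
  · have hcol : (fun x => (x, y)) ⁻¹' {p : ℝ × ℝ | 1 < p.2 ∧ p.2 < p.1} ∩ Ioi 0 ⊆ Ioi y :=
      fun x hx => hx.1.2
    exact (mul_le_mul_right (lintegral_mono_set hcol) _).trans
      (enorm_Efun_mul_setLIntegral_Ioi_le hb hy1)
  · simp [hy1]

theorem boundedOnX_m1_mul_setIntegral_Ioc {a b : ℝ} (ha : -1 < a) (hb : -1 < b) :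
    BoundedOnX a b fun g x => m1 x * ∫ y in Ioc x 1, Efun y * g y := by
  have hs : MeasurableSet {p : ℝ × ℝ | p.1 < p.2 ∧ p.2 ≤ 1} :=
    (measurableSet_lt measurable_fst measurable_snd).inter
      (measurableSet_le measurable_snd measurable_const)
  have hslice {x : ℝ} (hx : 0 < x) :
      Prod.mk x ⁻¹' {p : ℝ × ℝ | p.1 < p.2 ∧ p.2 ≤ 1} ∩ Ioi 0 = Ioc x 1 :=
    inter_eq_left.2 fun y hy => hx.trans hy.1
  refine .congr (.mul_setIntegral (C := 3 * (1 / (a + 1) + 1 / (b + 1))) hs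
    continuous_m1.aestronglyMeasurable
    (continuousOn_Efun.aestronglyMeasurable measurableSet_Ioi) fun y hy => ?_)
    fun g x hx => by simp only [hslice hx]
  by_cases hy1 : y ≤ 1
  · have hcol : (fun x => (x, y)) ⁻¹' {p : ℝ × ℝ | p.1 < p.2 ∧ p.2 ≤ 1} ∩ Ioi 0 ⊆ Ioo 0 y :=
      fun x hx => ⟨hx.2, hx.1.1⟩
    exact (mul_le_mul_right (lintegral_mono_set hcol) _).trans
      (enorm_Efun_mul_setLIntegral_Ioo_le ha hb hy hy1)
  · simp [hy1]

theorem boundedOnX_m2_mul_tail {a b : ℝ} (ha : a ∈ Ioc (-1 : ℝ) 1) (hb : 0 < b) :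
    BoundedOnX a b fun g x => m2 x * tail g x := by
  obtain ⟨C, hC⟩ := exists_setLIntegral_m2_mul_weight_le ha hb
  have hslice {x : ℝ} (hx : 0 < x) : Ioi x ∩ Ioi 0 = Ioi x :=
    inter_eq_left.2 (Ioi_subset_Ioi hx.le)
  have hcol (y : ℝ) : Iio y ∩ Ioi 0 = Ioo 0 y := Iio_inter_Ioi
  refine .congr (.mul_setIntegral (C := C) (measurableSet_lt measurable_fst measurable_snd)
    (continuousOn_m2.aestronglyMeasurable measurableSet_Ioi)
    (aestronglyMeasurable_const (b := (1 : ℝ))) fun y hy => ?_) fun g x hx => ?_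
  · rw [enorm_one, one_mul]
    exact (hcol y).symm ▸ hC y hy
  · simp only [one_mul]
    exact congrArg (m2 x * ∫ y in ·, g y) (hslice hx)

theorem boundedOnX_Aop {a b : ℝ} (ha : a ∈ Ioc (-1 : ℝ) 1) (hb : 0 < b) : BoundedOnX a b Aop := by
  have hupper := boundedOnX_m1_mul_setIntegral_Ioo (a := a) (b := b) (by linarith)
  have hlower := boundedOnX_m1_mul_setIntegral_Ioc ha.1 (b := b) (by linarith)
  refine (((BoundedOnX.id.add (hupper.const_mul 2)).add (hlower.const_mul (-2))).add
    ((boundedOnX_m2_mul_tail ha hb).const_mul (-2))).congr fun g x _ => ?_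
  have hS := integralEfunMul_eq g x
  rw [integralEfunMul] at hS
  rw [Aop, hS]
  change _ = g x + _ - 2 * m2 x * tail g x
  ring

theorem boundedOnX_A0op {a b : ℝ} (ha : a ∈ Ioc (-1 : ℝ) 1) (hb : 1 ≤ b) : BoundedOnX a b A0op :=
  have hA := boundedOnX_Aop ha (one_pos.trans_le hb)
  hA.add (hA.firstMoment_mul ha.2 hb (memX_m1 ha.1 (by linarith)))

theorem integral_mul_A0op_eq_zero {g : ℝ → ℝ} (hA : HasFirstMoment (Aop g)) :
    ∫ x in Ioi (0 : ℝ), x * A0op g x = 0 := by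
  have hm1 : IntegrableOn (fun x => x * m1 x) (Ioi 0) := hasFirstMoment_m1
  simp only [A0op, mul_add, mul_left_comm _ (∫ y in Ioi (0 : ℝ), y * Aop g y)]
  rw [integral_add hA (hm1.const_mul _), integral_const_mul, integral_mul_m1]
  ring

theorem stmt11_general {a b : ℝ} (ha : a ∈ Ioc (-1 : ℝ) 1) (hb : 1 ≤ b) :
    (∃ C > (0 : ℝ), ∀ g : ℝ → ℝ, MemX a b g →
      MemX a b (A0op g) ∧ (∫ x in Ioi (0 : ℝ), x * A0op g x) = 0 ∧
      Xnorm a b (A0op g) ≤ C * Xnorm a b g) ∧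
    (∀ g : ℝ → ℝ, MemX a b g →
      ∀ᵐ x ∂(volume.restrict (Ioi (0 : ℝ))), Lop (A0op g) x = g x) ∧
    (∀ g : ℝ → ℝ, MemX a b g → (∫ x in Ioi (0 : ℝ), x * g x) = 0 →
      (∀ᵐ x ∂(volume.restrict (Ioi (0 : ℝ))), Lop g x = 0) →
      ∀ᵐ x ∂(volume.restrict (Ioi (0 : ℝ))), g x = 0) := by
  have hA := boundedOnX_Aop ha (one_pos.trans_le hb)
  have hA₀ := boundedOnX_A0op ha hb
  have hmoment {g : ℝ → ℝ} (hg : MemX a b g) : HasFirstMoment g := hg.hasFirstMoment ha.2 hb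
  refine ⟨?_, fun g hg => (hmoment hg).Lop_A0op_ae_eq (hmoment (hA₀.memX hg)),
    fun g hg => (hmoment hg).ae_eq_zero_of_Lop_ae_eq_zero⟩
  obtain ⟨C, hC, hbound⟩ := hA₀.exists_Xnorm_le
  exact ⟨C, hC, fun g hg =>
    ⟨hA₀.memX hg, integral_mul_A0op_eq_zero (hmoment (hA.memX hg)), hbound g hg⟩⟩

theorem stmt11 (a b : ℝ) (ha : a ∈ Ioo (-1:ℝ) 1) (hb : 1 < b) :
    (∃ C > (0:ℝ), ∀ g : ℝ → ℝ, MemX a b g →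
      MemX a b (A0op g) ∧ (∫ x in Ioi (0:ℝ), x * A0op g x) = 0 ∧
      Xnorm a b (A0op g) ≤ C * Xnorm a b g) ∧
    (∀ g : ℝ → ℝ, MemX a b g →
      ∀ᵐ x ∂(volume.restrict (Ioi (0:ℝ))), Lop (A0op g) x = g x) ∧
    (∀ g : ℝ → ℝ, MemX a b g → (∫ x in Ioi (0:ℝ), x * g x) = 0 →
      (∀ᵐ x ∂(volume.restrict (Ioi (0:ℝ))), Lop g x = 0) →
      ∀ᵐ x ∂(volume.restrict (Ioi (0:ℝ))), g x = 0) :=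
  stmt11_general ⟨ha.1, ha.2.le⟩ hb.le
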